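/- Fix δ ∈ (0,1/2), a real M > 0, an integer K ≥ 2 and ξ > 1. Define C₂(x) = (K/((K+1)y))·∑_{H ∈ 𝔥₁} #Q_H·H/σ_{H^M,z} and C₃(x) = (K/((K+1)y))·∑_{H ∈ 𝔥₂} #Q_H·H/σ_{H^M,z}. Then both C₂(x) and C₃(x) tend to K(ξ−1)·ln(1/(2δ)) / (2(K+1)Mξ·ln ξ) as x → ∞. -/

import Mathlib

open scoped Classical

noncomputable def yy (δ x : ℝ) : ℕ := ⌈x * Real.log x ^ δ⌉₊

noncomputable def zz (δ x : ℝ) : ℝ :=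
  (yy δ x : ℝ) * Real.log (Real.log x) ^ 2 / Real.log x ^ (1/2 : ℝ)

noncomputable def primesUpTo (t : ℝ) : Finset ℕ :=
  (Finset.range (⌊t⌋₊ + 1)).filter fun p => p.Prime ∧ (p : ℝ) ≤ t

noncomputable def PP (t : ℝ) : ℕ := ∏ p ∈ primesUpTo t, p

noncomputable def sigUpTo (t : ℝ) : ℝ := ∏ p ∈ primesUpTo t, (1 - 1 / (p : ℝ))

noncomputable def primesBetween (w t : ℝ) : Finset ℕ :=
  (Finset.range (⌊t⌋₊ + 1)).filter fun p => p.Prime ∧ w < (p : ℝ) ∧ (p : ℝ) ≤ t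

noncomputable def sigBetween (w t : ℝ) : ℝ := ∏ p ∈ primesBetween w t, (1 - 1 / (p : ℝ))

def inS (t : ℝ) (b n : ℤ) : Prop :=
  ∀ p : ℕ, p.Prime → (p : ℝ) ≤ t → ¬ ((p : ℤ) ∣ (n - b))

def inSBetween (w t : ℝ) (b n : ℤ) : Prop :=
  ∀ p : ℕ, p.Prime → w < (p : ℝ) → (p : ℝ) ≤ t → ¬ ((p : ℤ) ∣ (n - b))

noncomputable def countS (t : ℝ) (b lo hi : ℤ) : ℕ :=
  ((Finset.Icc lo hi).filter (inS t b)).card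

noncomputable def EE (δ x : ℝ) (g : ℤ → ℝ) : ℝ :=
  (1 / (PP (zz δ x) : ℝ)) * ∑ b ∈ Finset.range (PP (zz δ x)), g (b : ℤ)

def frakH (δ ξ x : ℝ) : Set ℝ :=
  {H | ∃ j : ℕ, H = ξ ^ j ∧ 2 * (yy δ x : ℝ) / x ≤ H ∧ H ≤ (yy δ x : ℝ) / (ξ * zz δ x)}

def frakH1 (δ ξ x : ℝ) : Set ℝ :=
  {H | ∃ j : ℕ, Even j ∧ H = ξ ^ j ∧ 2 * (yy δ x : ℝ) / x ≤ H ∧ H ≤ (yy δ x : ℝ) / (ξ * zz δ x)}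

def frakH2 (δ ξ x : ℝ) : Set ℝ :=
  {H | ∃ j : ℕ, Odd j ∧ H = ξ ^ j ∧ 2 * (yy δ x : ℝ) / x ≤ H ∧ H ≤ (yy δ x : ℝ) / (ξ * zz δ x)}

noncomputable def QH (δ ξ x H : ℝ) : Finset ℕ :=
  (Finset.range (⌊(yy δ x : ℝ) / H⌋₊ + 1)).filter fun q =>
    q.Prime ∧ (yy δ x : ℝ) / (ξ * H) < (q : ℝ) ∧ (q : ℝ) ≤ (yy δ x : ℝ) / H

noncomputable def Hq (δ ξ x : ℝ) (q : ℕ) : ℝ :=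
  if h : ∃ H ∈ frakH δ ξ x, (yy δ x : ℝ) / (ξ * H) < (q : ℝ) ∧ (q : ℝ) ≤ (yy δ x : ℝ) / H
  then h.choose else 1

noncomputable def APset (M : ℝ) (K : ℕ) (b : ℤ) (H : ℝ) (q : ℕ) (n : ℤ) : Finset ℤ :=
  ((Finset.Icc 1 ⌊(K : ℝ) * H⌋₊).image fun h : ℕ => n + (q : ℤ) * (h : ℤ)).filter (inS (H ^ M) b)

noncomputable def lam (M zv : ℝ) (K : ℕ) (b : ℤ) (H : ℝ) (q : ℕ) (n : ℤ) : ℝ :=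
  if ∀ m ∈ APset M K b H q n, inSBetween (H ^ M) zv b m
  then sigBetween (H ^ M) zv ^ (-((APset M K b H q n).card : ℤ))
  else 0

noncomputable def APsetStar (M : ℝ) (K : ℕ) (N b : ℤ) (H : ℝ) (q : ℕ) (n : ℤ) : Finset ℤ :=
  ((Finset.Icc 1 ⌊(K : ℝ) * H⌋₊).image fun h : ℕ => n - (q : ℤ) * (h : ℤ)).filter (inS (H ^ M) (-N - b))

noncomputable def lamStar (M zv : ℝ) (K : ℕ) (N b : ℤ) (H : ℝ) (q : ℕ) (n : ℤ) : ℝ :=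
  if ∀ m ∈ APsetStar M K N b H q n, inSBetween (H ^ M) zv (-N - b) m
  then sigBetween (H ^ M) zv ^ (-((APsetStar M K N b H q n).card : ℤ))
  else 0

section Auxiliary

open Real Filter Topology MeasureTheory

/-- The unnormalised Fejér kernel. -/
noncomputable def fejerKernel (l v : ℝ) : ℝ := ∫ t in (0 : ℝ)..l, (l - t) * cos (t * v)

lemma continuous_fejerKernel (l : ℝ) : Continuous (fejerKernel l) := by
  unfold fejerKernel
  exact intervalIntegral.continuous_parametric_intervalIntegral_of_continuous'
    (by fun_prop) 0 l

lemma fejerKernel_zero (l : ℝ) : fejerKernel l 0 = l ^ 2 / 2 := by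
  have : ∀ t ∈ Set.uIcc 0 l, HasDerivAt (fun t : ℝ => l * t - t ^ 2 / 2)
      ((l - t) * cos (t * 0)) t := by
    intro t _
    have := ((hasDerivAt_id t).const_mul l).sub (((hasDerivAt_id t).pow 2).div_const 2)
    refine this.congr_deriv ?_
    simp
  rw [fejerKernel, intervalIntegral.integral_eq_sub_of_hasDerivAt this
    (Continuous.intervalIntegrable (by fun_prop) _ _)]
  ring

lemma fejerKernel_of_ne_zero (l : ℝ) {v : ℝ} (hv : v ≠ 0) :
    fejerKernel l v = (1 - cos (l * v)) / v ^ 2 := by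
  have : ∀ t ∈ Set.uIcc 0 l, HasDerivAt
      (fun t : ℝ => (l - t) * (sin (t * v) / v) - cos (t * v) / v ^ 2)
      ((l - t) * cos (t * v)) t := by
    intro t _
    have h0 : HasDerivAt (fun t : ℝ => t * v) v t := by
      simpa using (hasDerivAt_id t).mul_const v
    have := (((hasDerivAt_const t l).sub (hasDerivAt_id t)).mul (h0.sin.div_const v)).sub
      (h0.cos.div_const (v ^ 2))
    refine this.congr_deriv ?_
    simp
    field_simp
    ring
  rw [fejerKernel, intervalIntegral.integral_eq_sub_of_hasDerivAt this
    (Continuous.intervalIntegrable (by fun_prop) _ _)]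
  simp
  ring

lemma fejerKernel_nonneg (l v : ℝ) : 0 ≤ fejerKernel l v := by
  rcases eq_or_ne v 0 with rfl | hv
  · rw [fejerKernel_zero]; positivity
  · rw [fejerKernel_of_ne_zero l hv]
    have := cos_le_one (l * v)
    exact div_nonneg (by linarith) (by positivity)

lemma fejerKernel_le (l v : ℝ) : fejerKernel l v ≤ (l ^ 2 / 2 + 2) * (1 + v ^ 2)⁻¹ := by
  rw [← div_eq_mul_inv, le_div_iff₀ (by positivity)]
  rcases eq_or_ne v 0 with rfl | hv
  · rw [fejerKernel_zero]; nlinarith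
  · rw [fejerKernel_of_ne_zero l hv, div_mul_eq_mul_div, div_le_iff₀ (by positivity)]
    have h1 := one_sub_sq_div_two_le_cos (x := l * v)
    have h2 := neg_one_le_cos (l * v)
    nlinarith [sq_nonneg v]

lemma integrable_fejerKernel (l : ℝ) : Integrable (fejerKernel l) := by
  refine (integrable_inv_one_add_sq.const_mul (l ^ 2 / 2 + 2)).mono'
    (continuous_fejerKernel l).aestronglyMeasurable (ae_of_all _ fun v => ?_)
  rw [norm_of_nonneg (fejerKernel_nonneg l v)]
  exact fejerKernel_le l v

lemma fejerKernel_scale (l v : ℝ) : fejerKernel l v = l ^ 2 * fejerKernel 1 (l * v) := by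
  rcases eq_or_ne l 0 with rfl | hl
  · simp [fejerKernel]
  rcases eq_or_ne v 0 with rfl | hv
  · simp [fejerKernel_zero]; ring
  · rw [fejerKernel_of_ne_zero l hv, fejerKernel_of_ne_zero 1 (mul_ne_zero hl hv)]
    field_simp

lemma integral_fejerKernel_pos {l : ℝ} (hl : 0 < l) : 0 < ∫ v, fejerKernel l v := by
  refine integral_pos_of_integrable_nonneg_nonzero (x := 0) (continuous_fejerKernel l)
    (integrable_fejerKernel l) (fejerKernel_nonneg l) ?_
  rw [fejerKernel_zero]; positivity

/-- The Fejér kernels concentrate around the origin. -/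
lemma exists_fejerKernel_concentrated {a η : ℝ} (ha : 0 < a) (hη : 0 < η) :
    ∃ l > 0, (1 - η) * ∫ v, fejerKernel l v ≤ ∫ v in (-a)..a, fejerKernel l v := by
  have hm := integral_fejerKernel_pos one_pos
  have ht : Tendsto (fun l : ℝ => ∫ v in (-(l * a))..(l * a), fejerKernel 1 v) atTop
      (𝓝 (∫ v, fejerKernel 1 v)) :=
    intervalIntegral_tendsto_integral (integrable_fejerKernel 1)
      (tendsto_neg_atTop_atBot.comp (tendsto_id.atTop_mul_const ha))
      (tendsto_id.atTop_mul_const ha)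
  have hlt : (1 - η) * ∫ v, fejerKernel 1 v < ∫ v, fejerKernel 1 v := by nlinarith
  obtain ⟨l, hl, hl0⟩ := ((ht.eventually_const_lt hlt).and (eventually_gt_atTop 0)).exists
  refine ⟨l, hl0, ?_⟩
  simp_rw [fejerKernel_scale l]
  rw [integral_const_mul, intervalIntegral.integral_const_mul,
    intervalIntegral.integral_comp_mul_left _ hl0.ne', Measure.integral_comp_mul_left]
  rw [abs_of_pos (inv_pos.mpr hl0), mul_neg]
  simp only [smul_eq_mul]
  have : 0 < l ^ 2 * l⁻¹ := by positivity
  nlinarith [mul_lt_mul_of_pos_left hl this]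

/-- The Tauberian step of the Wiener–Ikehara argument. -/
lemma tendsto_one_of_fejer_means {B : ℝ → ℝ} {C : ℝ} (hB0 : ∀ u, 0 ≤ B u) (hBC : ∀ u, B u ≤ C)
    (hmeas : Measurable B) (hmono : Monotone fun u => exp u * B u)
    (h : ∀ l > 0, Tendsto (fun T => ∫ v, B (T - v) * fejerKernel l v) atTop
      (𝓝 (∫ v, fejerKernel l v))) :
    Tendsto B atTop (𝓝 1) := by
  have hintegrable : ∀ l T, Integrable fun v => B (T - v) * fejerKernel l v := by
    intro l T
    refine (integrable_fejerKernel l).bdd_mul (c := C)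
      (hmeas.comp (by fun_prop)).aestronglyMeasurable (ae_of_all _ fun v => ?_)
    rw [norm_of_nonneg (hB0 _)]; exact hBC _
  have hslow : ∀ {u w a : ℝ}, u ≤ w → w ≤ u + 2 * a → B u ≤ exp (2 * a) * B w := by
    intro u w a h1 h2
    have h3 : exp u * B u ≤ exp w * B w := hmono h1
    have h4 : exp w ≤ exp u * exp (2 * a) := by rw [← exp_add]; exact exp_le_exp.mpr h2
    have h5 := mul_le_mul_of_nonneg_right h4 (hB0 w)
    have h6 : exp u * B u ≤ exp u * (exp (2 * a) * B w) := by linarith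
    exact le_of_mul_le_mul_left h6 (exp_pos u)
  have hC : 0 ≤ C := (hB0 0).trans (hBC 0)
  refine tendsto_order.mpr ⟨fun b hb => ?_, fun b hb => ?_⟩
  · obtain ⟨a, ha, hab⟩ : ∃ a > 0, exp (2 * a) * b < 1 := by
      have : Tendsto (fun a : ℝ => exp (2 * a) * b) (𝓝[>] 0) (𝓝 (exp (2 * 0) * b)) :=
        (Continuous.tendsto (by fun_prop) 0).mono_left nhdsWithin_le_nhds
      rw [mul_zero, exp_zero, one_mul] at this
      obtain ⟨a, h1, h2⟩ := ((this.eventually_lt_const hb).and self_mem_nhdsWithin).exists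
      exact ⟨a, h2, h1⟩
    obtain ⟨η, hη, hηb⟩ : ∃ η > 0, exp (2 * a) * b + C * η < 1 := by
      have : Tendsto (fun η : ℝ => exp (2 * a) * b + C * η) (𝓝[>] 0)
          (𝓝 (exp (2 * a) * b + C * 0)) :=
        (Continuous.tendsto (by fun_prop) 0).mono_left nhdsWithin_le_nhds
      rw [mul_zero, add_zero] at this
      obtain ⟨a, h1, h2⟩ := ((this.eventually_lt_const hab).and self_mem_nhdsWithin).exists
      exact ⟨a, h2, h1⟩
    obtain ⟨l, hl, hconc⟩ := exists_fejerKernel_concentrated ha hη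
    have hm := integral_fejerKernel_pos hl
    set m := ∫ v, fejerKernel l v with hmdef
    have hev := (h l hl).eventually_const_lt
      (show (exp (2 * a) * b + C * η) * m < m by nlinarith)
    have hev' := (tendsto_atTop_add_const_right atTop (-a) tendsto_id).eventually hev
    filter_upwards [hev'] with T hT
    simp only [id] at hT
    rw [← sub_eq_add_neg] at hT
    by_contra! hle
    have key : ∫ v, B (T - a - v) * fejerKernel l v ≤
        ∫ v, ((exp (2 * a) * b) * fejerKernel l v +
          C * (fejerKernel l v - (Set.Ioc (-a) a).indicator (fejerKernel l) v)) := by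
      have hI := (integrable_fejerKernel l).indicator (measurableSet_Ioc (a := -a) (b := a))
      refine integral_mono (hintegrable l _) (((integrable_fejerKernel l).const_mul _).add
        (((integrable_fejerKernel l).sub hI).const_mul _)) fun v => ?_
      have hk := fejerKernel_nonneg l v
      by_cases hv : v ∈ Set.Ioc (-a) a
      · simp only [Set.indicator_of_mem hv, sub_self, mul_zero, add_zero]
        refine mul_le_mul_of_nonneg_right ?_ hk
        refine (hslow (w := T) (a := a) (by linarith [hv.1]) (by linarith [hv.2])).trans ?_
        exact mul_le_mul_of_nonneg_left hle (exp_pos _).le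
      · simp only [Set.indicator_of_notMem hv, sub_zero]
        have hb0 : 0 ≤ b := (hB0 T).trans hle
        have := mul_le_mul_of_nonneg_right (hBC (T - a - v)) hk
        have : 0 ≤ exp (2 * a) * b * fejerKernel l v := by positivity
        linarith
    have hI := (integrable_fejerKernel l).indicator (measurableSet_Ioc (a := -a) (b := a))
    have hsub : Integrable fun v =>
        fejerKernel l v - (Set.Ioc (-a) a).indicator (fejerKernel l) v :=
      (integrable_fejerKernel l).sub hI
    rw [integral_add ((integrable_fejerKernel l).const_mul _) (hsub.const_mul _),
      integral_const_mul, integral_const_mul,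
      integral_sub (integrable_fejerKernel l) hI, integral_indicator measurableSet_Ioc,
      ← intervalIntegral.integral_of_le (by linarith), ← hmdef] at key
    nlinarith [mul_le_mul_of_nonneg_left hconc hC]
  · obtain ⟨a, ha, hab⟩ : ∃ a > 0, exp (2 * a) < b := by
      have : Tendsto (fun a : ℝ => exp (2 * a)) (𝓝[>] 0) (𝓝 (exp (2 * 0))) :=
        (Continuous.tendsto (by fun_prop) 0).mono_left nhdsWithin_le_nhds
      rw [mul_zero, exp_zero] at this
      obtain ⟨a, h1, h2⟩ := ((this.eventually_lt_const hb).and self_mem_nhdsWithin).exists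
      exact ⟨a, h2, h1⟩
    obtain ⟨η, hη, hηb⟩ : ∃ η > 0, exp (2 * a) < b * (1 - η) := by
      have : Tendsto (fun η : ℝ => b * (1 - η)) (𝓝[>] 0) (𝓝 (b * (1 - 0))) :=
        (Continuous.tendsto (by fun_prop) 0).mono_left nhdsWithin_le_nhds
      rw [sub_zero, mul_one] at this
      obtain ⟨a, h1, h2⟩ := ((this.eventually_const_lt hab).and self_mem_nhdsWithin).exists
      exact ⟨a, h2, h1⟩
    obtain ⟨l, hl, hconc⟩ := exists_fejerKernel_concentrated ha hη
    have hm := integral_fejerKernel_pos hl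
    set m := ∫ v, fejerKernel l v with hmdef
    have hexp := exp_pos (2 * a)
    have hev := (h l hl).eventually_lt_const
      (show m < (exp (2 * a))⁻¹ * b * (1 - η) * m by
        have : 1 < (exp (2 * a))⁻¹ * (b * (1 - η)) := by
          rw [inv_mul_eq_div, lt_div_iff₀ hexp]; linarith
        nlinarith)
    have hev' := (tendsto_atTop_add_const_right atTop a tendsto_id).eventually hev
    filter_upwards [hev'] with T hT
    simp only [id] at hT
    by_contra! hle
    have key : ∫ v, (exp (2 * a))⁻¹ * b * (Set.Ioc (-a) a).indicator (fejerKernel l) v ≤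
        ∫ v, B (T + a - v) * fejerKernel l v := by
      have hI := (integrable_fejerKernel l).indicator (measurableSet_Ioc (a := -a) (b := a))
      refine integral_mono (hI.const_mul _) (hintegrable l _) fun v => ?_
      have hk := fejerKernel_nonneg l v
      by_cases hv : v ∈ Set.Ioc (-a) a
      · simp only [Set.indicator_of_mem hv]
        refine mul_le_mul_of_nonneg_right ?_ hk
        rw [inv_mul_le_iff₀ hexp]
        exact hle.trans (hslow (by linarith [hv.2]) (by linarith [hv.1]))
      · simp only [Set.indicator_of_notMem hv, mul_zero]
        exact mul_nonneg (hB0 _) hk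
    rw [integral_const_mul, integral_indicator measurableSet_Ioc,
      ← intervalIntegral.integral_of_le (by linarith)] at key
    have : 0 ≤ (exp (2 * a))⁻¹ * b := by positivity
    nlinarith [mul_le_mul_of_nonneg_left hconc this]

/-- If the Laplace transform of a bounded function extends continuously to the closed right
half-plane, then its Fejér means tend to zero. -/
lemma tendsto_fejer_mean_zero {D : ℝ → ℝ} {C : ℝ} {G : ℂ → ℂ} (hD : Measurable D)
    (hDC : ∀ u, |D u| ≤ C) (hG : ContinuousOn G {w | 0 ≤ w.re})
    (hL : ∀ w : ℂ, 0 < w.re → ∫ u in Set.Ioi (0 : ℝ), (D u : ℂ) * Complex.exp (-w * u) = G w)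
    {l : ℝ} (hl : 0 < l) :
    Tendsto (fun T => ∫ u in Set.Ioi (0 : ℝ), D u * fejerKernel l (T - u)) atTop (𝓝 0) := by
  have hC : 0 ≤ C := (abs_nonneg _).trans (hDC 0)
  have hGline : ∀ ε : ℝ, 0 ≤ ε → Continuous fun t : ℝ => G (ε + t * Complex.I) := fun ε hε =>
    hG.comp_continuous (by fun_prop) (by intro t; simpa using hε)
  have hIε : ∀ ε : ℝ, 0 < ε → IntegrableOn (fun u : ℝ => D u * exp (-ε * u)) (Set.Ioi 0) := by
    intro ε hε
    exact (exp_neg_integrableOn_Ioi 0 hε).bdd_mul (c := C) hD.aestronglyMeasurable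
      (ae_of_all _ hDC)
  -- Fubini for positive real part
  have step1 : ∀ T ε : ℝ, 0 < ε →
      ∫ u in Set.Ioi (0 : ℝ), D u * exp (-ε * u) * fejerKernel l (T - u) =
      ∫ t in (0 : ℝ)..l, (l - t) *
        (Complex.exp (t * T * Complex.I) * G (ε + t * Complex.I)).re := by
    intro T ε hε
    have hre : ∀ t : ℝ, (Complex.exp (t * T * Complex.I) * G (ε + t * Complex.I)).re =
        ∫ u in Set.Ioi (0 : ℝ), D u * exp (-ε * u) * cos (t * (T - u)) := by
      intro t
      rw [← hL _ (by simpa using hε), ← integral_const_mul, ← Complex.reCLM_apply,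
        ← ContinuousLinearMap.integral_comp_comm]
      · refine integral_congr_ae (ae_of_all _ fun u => ?_)
        simp only [Complex.reCLM_apply]
        have : Complex.exp (t * T * Complex.I) *
            ((D u : ℂ) * Complex.exp (-(ε + t * Complex.I) * u)) =
            ((D u * exp (-ε * u) : ℝ) : ℂ) * Complex.exp ((t * (T - u) : ℝ) * Complex.I) := by
          push_cast
          rw [mul_left_comm, ← Complex.exp_add, mul_assoc (D u : ℂ), ← Complex.exp_add]
          congr 2
          ring
        rw [this, Complex.re_ofReal_mul, Complex.exp_ofReal_mul_I_re]
      · refine Integrable.const_mul ?_ _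
        refine Integrable.bdd_mul (c := C) (integrableOn_exp_mul_complex_Ioi (by simpa using hε) 0)
          (by fun_prop) (ae_of_all _ fun u => ?_)
        simpa using hDC u
    simp_rw [hre, fejerKernel, intervalIntegral.integral_of_le hl.le, ← integral_const_mul]
    rw [integral_integral_swap]
    · refine integral_congr_ae (ae_of_all _ fun t => integral_congr_ae (ae_of_all _ fun u => ?_))
      simp only
      ring
    · have h1 : Integrable (fun z : ℝ × ℝ => (D z.1 * exp (-ε * z.1)) * (l - z.2))
          ((volume.restrict (Set.Ioi 0)).prod (volume.restrict (Set.Ioc 0 l))) :=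
        Integrable.mul_prod (hIε ε hε) (Continuous.integrableOn_Ioc (f := fun t : ℝ => l - t)
          (by fun_prop))
      refine (h1.bdd_mul (c := 1) (f := fun z : ℝ × ℝ => cos (z.2 * (T - z.1)))
        (by fun_prop) (ae_of_all _ fun z => abs_cos_le_one _)).congr (ae_of_all _ fun z => ?_)
      simp only [Function.uncurry]
      ring
  have step2 : ∀ T : ℝ, ∫ u in Set.Ioi (0 : ℝ), D u * fejerKernel l (T - u) =
      ∫ t in (0 : ℝ)..l, (l - t) *
        (Complex.exp (t * T * Complex.I) * G (t * Complex.I)).re := by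
    intro T
    have hlim1 : Tendsto (fun ε : ℝ =>
        ∫ u in Set.Ioi (0 : ℝ), D u * exp (-ε * u) * fejerKernel l (T - u)) (𝓝[>] 0)
        (𝓝 (∫ u in Set.Ioi (0 : ℝ), D u * fejerKernel l (T - u))) := by
      refine tendsto_integral_filter_of_dominated_convergence
        (fun u => C * fejerKernel l (T - u)) ?_ ?_ ?_ ?_
      · refine Eventually.of_forall fun ε => ?_
        have := (continuous_fejerKernel l).measurable
        exact Measurable.aestronglyMeasurable (by fun_prop)
      · filter_upwards [self_mem_nhdsWithin] with ε hε
        filter_upwards [ae_restrict_mem measurableSet_Ioi] with u hu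
        rw [norm_mul, norm_mul, norm_of_nonneg (fejerKernel_nonneg _ _), Real.norm_eq_abs,
          Real.norm_eq_abs, abs_of_pos (exp_pos _)]
        refine mul_le_mul_of_nonneg_right ?_ (fejerKernel_nonneg _ _)
        have : exp (-ε * u) ≤ 1 := by
          rw [exp_le_one_iff]
          have := mul_pos (Set.mem_Ioi.mp hε) (Set.mem_Ioi.mp hu)
          linarith
        calc |D u| * exp (-ε * u) ≤ |D u| * 1 := by gcongr
          _ ≤ C := by simpa using hDC u
      · exact (((integrable_fejerKernel l).comp_sub_left T).const_mul C).integrableOn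
      · refine ae_of_all _ fun u => ?_
        have : Continuous fun ε : ℝ => D u * exp (-ε * u) * fejerKernel l (T - u) := by fun_prop
        simpa using (this.tendsto 0).mono_left nhdsWithin_le_nhds
    have hlim2 : Tendsto (fun ε : ℝ => ∫ t in (0 : ℝ)..l, (l - t) *
        (Complex.exp (t * T * Complex.I) * G (ε + t * Complex.I)).re) (𝓝[>] 0)
        (𝓝 (∫ t in (0 : ℝ)..l, (l - t) *
          (Complex.exp (t * T * Complex.I) * G (t * Complex.I)).re)) := by
      obtain ⟨A, hA⟩ : ∃ A, ∀ w ∈ Set.Icc (0 : ℝ) 1 ×ℂ Set.Icc (0 : ℝ) l, ‖G w‖ ≤ A := by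
        refine IsCompact.exists_bound_of_continuousOn
          (isCompact_Icc.reProdIm isCompact_Icc) (hG.mono fun w hw => ?_)
        exact hw.1.1
      refine intervalIntegral.tendsto_integral_filter_of_dominated_convergence
        (fun t => l * A) ?_ ?_ (by simp) ?_
      · filter_upwards [self_mem_nhdsWithin] with ε hε
        have := hGline ε (le_of_lt hε)
        have hexp : Continuous fun t : ℝ => Complex.exp (t * T * Complex.I) := by fun_prop
        exact ((continuous_const.sub continuous_id).mul
          (Complex.continuous_re.comp (hexp.mul this))).aestronglyMeasurable
      · filter_upwards [Ioo_mem_nhdsGT one_pos] with ε hε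
        refine ae_of_all _ fun t ht => ?_
        rw [Set.uIoc_of_le hl.le] at ht
        rw [norm_mul]
        have h1 : ‖l - t‖ ≤ l := by
          rw [Real.norm_eq_abs, abs_of_nonneg (by linarith [ht.2])]; linarith [ht.1]
        have h2 : ‖(Complex.exp (t * T * Complex.I) * G (ε + t * Complex.I)).re‖ ≤ A := by
          refine (Complex.abs_re_le_norm _).trans ?_
          have : ‖Complex.exp (t * T * Complex.I)‖ = 1 := by
            have := Complex.norm_exp_ofReal_mul_I (t * T)
            push_cast at this
            exact this
          rw [norm_mul, this, one_mul]
          refine hA _ ⟨?_, ?_⟩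
          · simpa using ⟨hε.1.le, hε.2.le⟩
          · simpa using ⟨ht.1.le, ht.2⟩
        exact mul_le_mul h1 h2 (norm_nonneg _) hl.le
      · refine ae_of_all _ fun t ht => ?_
        have hw : Tendsto (fun ε : ℝ => G (ε + t * Complex.I)) (𝓝[>] 0)
            (𝓝 (G (t * Complex.I))) := by
          have h0 : ContinuousWithinAt G {w | 0 ≤ w.re} (t * Complex.I) := hG _ (by simp)
          refine h0.tendsto.comp (tendsto_nhdsWithin_iff.mpr ⟨?_, ?_⟩)
          · have : Continuous fun ε : ℝ => (ε : ℂ) + t * Complex.I := by fun_prop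
            simpa using (this.tendsto 0).mono_left nhdsWithin_le_nhds
          · filter_upwards [self_mem_nhdsWithin] with ε hε
            simpa using le_of_lt hε
        exact ((Complex.continuous_re.tendsto _).comp (hw.const_mul _)).const_mul _
    refine tendsto_nhds_unique hlim1 (hlim2.congr' ?_)
    filter_upwards [self_mem_nhdsWithin] with ε hε
    exact (step1 T ε hε).symm
  simp_rw [step2]
  -- Riemann–Lebesgue
  have hRL := Real.tendsto_integral_exp_smul_cocompact
    ((Set.Ioc 0 l).indicator fun t : ℝ => ((l - t : ℝ) : ℂ) * G (t * Complex.I))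
  have hT : Tendsto (fun T : ℝ => -(T / (2 * π))) atTop (cocompact ℝ) :=
    (tendsto_neg_atTop_atBot.comp (tendsto_id.atTop_div_const (by positivity))).mono_right
      atBot_le_cocompact
  have hfin := (Complex.continuous_re.tendsto _).comp (hRL.comp hT)
  rw [Complex.zero_re] at hfin
  refine hfin.congr fun T => ?_
  have hG0 : Continuous fun t : ℝ => G (t * Complex.I) := by
    simpa using hGline 0 le_rfl
  have hintegrable : IntegrableOn (fun t : ℝ => ((l - t : ℝ) : ℂ) *
      (Complex.exp (t * T * Complex.I) * G (t * Complex.I))) (Set.Ioc 0 l) :=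
    (((by fun_prop : Continuous fun t : ℝ => ((l - t : ℝ) : ℂ)).mul
      ((by fun_prop : Continuous fun t : ℝ => Complex.exp (t * T * Complex.I)).mul hG0))
      ).integrableOn_Ioc
  have heq : ∫ v : ℝ, fourierChar (-(v * -(T / (2 * π)))) •
      (Set.Ioc 0 l).indicator (fun t : ℝ => ((l - t : ℝ) : ℂ) * G (t * Complex.I)) v =
      ∫ t in Set.Ioc 0 l, ((l - t : ℝ) : ℂ) *
        (Complex.exp (t * T * Complex.I) * G (t * Complex.I)) := by
    rw [← integral_indicator measurableSet_Ioc]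
    refine integral_congr_ae (ae_of_all _ fun t => ?_)
    by_cases ht : t ∈ Set.Ioc 0 l
    · simp only [Set.indicator_of_mem ht, Circle.smul_def, Real.fourierChar_apply, smul_eq_mul]
      have : ((2 * π * -(t * -(T / (2 * π))) : ℝ) : ℂ) * Complex.I = t * T * Complex.I := by
        congr 1
        rw [← Complex.ofReal_mul]
        congr 1
        field_simp
      rw [this]
      ring
    · simp [Set.indicator_of_notMem ht]
  simp only [Function.comp_apply]
  rw [heq, ← Complex.reCLM_apply, ← ContinuousLinearMap.integral_comp_comm _ hintegrable,
    intervalIntegral.integral_of_le hl.le]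
  refine integral_congr_ae (ae_of_all _ fun t => ?_)
  simp only [Complex.reCLM_apply, Complex.re_ofReal_mul]

open ArithmeticFunction in
lemma integral_psi_exp_mul_exp (w : ℂ) (hw : 0 < w.re) :
    ∫ u in Set.Ioi (0 : ℝ), ((Chebyshev.psi (exp u) * exp (-u) : ℝ) : ℂ) * Complex.exp (-w * u) =
      LSeries (fun n => ((vonMangoldt n : ℝ) : ℂ)) (1 + w) / (1 + w) := by
  have hs : (1 : ℝ) < (1 + w).re := by simpa using hw
  have hne : (1 + w) ≠ 0 := fun h => by rw [h] at hs; norm_num at hs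
  have hO : (fun n : ℕ => ∑ k ∈ Finset.Icc 1 n, vonMangoldt k) =O[atTop]
      fun n : ℕ => (n : ℝ) ^ (1 : ℝ) := by
    refine Asymptotics.IsBigO.of_bound (Real.log 4 + 4) (Eventually.of_forall fun n => ?_)
    have h1 := Chebyshev.psi_le_const_mul_self (x := n) n.cast_nonneg
    have h2 := Chebyshev.psi_nonneg n
    rw [Chebyshev.psi, Nat.floor_natCast, ← Finset.Icc_add_one_left_eq_Ioc, zero_add] at h1 h2
    rw [norm_of_nonneg h2, rpow_one, norm_of_nonneg n.cast_nonneg]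
    exact h1
  rw [LSeries_eq_mul_integral_of_nonneg (fun n => vonMangoldt n) zero_le_one hs hO
    (fun n => vonMangoldt_nonneg), mul_div_cancel_left₀ _ hne]
  rw [show (1 : ℝ) = exp 0 by simp, ← integral_comp_exp_Ioi]
  refine integral_congr_ae (ae_of_all _ fun u => ?_)
  have hcast : (∑ k ∈ Finset.Icc 1 ⌊exp u⌋₊, ((vonMangoldt k : ℝ) : ℂ)) =
      (Chebyshev.psi (exp u) : ℂ) := by
    rw [Chebyshev.psi, ← Finset.Icc_add_one_left_eq_Ioc, zero_add]
    push_cast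
    rfl
  simp only
  rw [hcast, Complex.real_smul, Complex.ofReal_exp, Complex.cpow_def_of_ne_zero
    (Complex.exp_ne_zero _), ← Complex.ofReal_exp, ← Complex.ofReal_log (exp_pos u).le, log_exp]
  push_cast
  rw [mul_assoc, mul_left_comm (Complex.exp u), ← Complex.exp_add, ← Complex.exp_add]
  congr 2
  ring

open ArithmeticFunction in
/-- The **prime number theorem** for the Chebyshev function `ψ`, in logarithmic scale. -/
lemma tendsto_psi_exp_mul_exp_neg :
    Tendsto (fun u => Chebyshev.psi (exp u) * exp (-u)) atTop (𝓝 1) := by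
  set B : ℝ → ℝ := fun u => Chebyshev.psi (exp u) * exp (-u) with hBdef
  have hB0 : ∀ u, 0 ≤ B u := fun u => mul_nonneg (Chebyshev.psi_nonneg _) (exp_pos _).le
  have hBC : ∀ u, B u ≤ Real.log 4 + 4 := by
    intro u
    have := mul_le_mul_of_nonneg_right (Chebyshev.psi_le_const_mul_self (exp_pos u).le)
      (exp_pos (-u)).le
    rwa [mul_assoc, ← exp_add, add_neg_cancel, exp_zero, mul_one] at this
  have hmeas : Measurable B :=
    (Chebyshev.psi_mono.measurable.comp measurable_exp).mul (by fun_prop)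
  have hC : 0 ≤ Real.log 4 + 4 := (hB0 0).trans (hBC 0)
  set F := vonMangoldt.LFunctionResidueClassAux (1 : ZMod 1)
  have hF : ContinuousOn F {s | 1 ≤ s.re} := vonMangoldt.continuousOn_LFunctionResidueClassAux 1
  have hFe : ∀ s : ℂ, 1 < s.re →
      LSeries (fun n => ((vonMangoldt n : ℝ) : ℂ)) s = F s + 1 / (s - 1) := by
    intro s hs
    have h := vonMangoldt.eqOn_LFunctionResidueClassAux (q := 1) (a := 1) isUnit_one hs
    have h2 : (fun n => ((vonMangoldt.residueClass (1 : ZMod 1) n : ℝ) : ℂ)) =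
        fun n => ((vonMangoldt n : ℝ) : ℂ) := by
      funext n
      congr 1
      rw [vonMangoldt.residueClass, Set.indicator_of_mem]
      exact Subsingleton.elim _ _
    rw [h2] at h
    simp only [Nat.totient_one, Nat.cast_one, inv_one] at h
    rw [show F s = _ from h]
    ring
  refine tendsto_one_of_fejer_means hB0 hBC hmeas ?_ fun l hl => ?_
  · have : (fun u => exp u * B u) = fun u => Chebyshev.psi (exp u) := by
      funext u
      rw [hBdef]
      simp only
      rw [mul_left_comm, ← exp_add, add_neg_cancel, exp_zero, mul_one]
    rw [this]
    exact Chebyshev.psi_mono.comp exp_monotone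
  · have hzero := tendsto_fejer_mean_zero (D := fun u => B u - 1) (C := Real.log 4 + 4 + 1)
      (G := fun w => (F (1 + w) - 1) / (1 + w)) (hmeas.sub_const 1)
      (fun u => (abs_sub _ _).trans (by rw [abs_of_nonneg (hB0 u), abs_one]; linarith [hBC u]))
      ?_ ?_ hl
    · have hk1 : Tendsto (fun T => ∫ u in Set.Ioi (0 : ℝ), fejerKernel l (T - u)) atTop
          (𝓝 (∫ v, fejerKernel l v)) := by
        have h1 : ∀ T : ℝ, ∫ u in Set.Ioi (0 : ℝ), fejerKernel l (T - u) =
            ∫ v in Set.Iio T, fejerKernel l v := by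
          intro T
          rw [← integral_indicator measurableSet_Ioi, ← integral_indicator measurableSet_Iio,
            ← integral_sub_left_eq_self _ volume T]
          refine integral_congr_ae (ae_of_all _ fun v => ?_)
          by_cases hv : v < T
          · simp [Set.indicator, hv]
          · simp [Set.indicator, hv]
        simp_rw [h1]
        have hcov : AECover volume atTop fun T : ℝ => Set.Iio T := aecover_Iio tendsto_id
        exact hcov.integral_tendsto_of_countably_generated (integrable_fejerKernel l)
      have hsum := hzero.add hk1
      rw [zero_add] at hsum
      refine hsum.congr fun T => ?_
      have hi1 : IntegrableOn (fun u => fejerKernel l (T - u)) (Set.Ioi 0) :=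
        ((integrable_fejerKernel l).comp_sub_left T).integrableOn
      have hi2 : IntegrableOn (fun u => (B u - 1) * fejerKernel l (T - u)) (Set.Ioi 0) := by
        refine hi1.bdd_mul (c := Real.log 4 + 4 + 1) (hmeas.sub_const 1).aestronglyMeasurable
          (ae_of_all _ fun u => (abs_sub _ _).trans ?_)
        rw [abs_of_nonneg (hB0 u), abs_one]; linarith [hBC u]
      rw [← integral_add hi2 hi1, ← integral_sub_left_eq_self _ volume T,
        ← integral_indicator measurableSet_Ioi]
      refine integral_congr_ae (ae_of_all _ fun u => ?_)
      by_cases hu : u ∈ Set.Ioi (0 : ℝ)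
      · simp only [Set.indicator_of_mem hu, sub_sub_cancel]
        ring
      · simp only [Set.indicator_of_notMem hu, sub_sub_cancel]
        have : B u = 0 := by
          rw [hBdef]
          simp only
          rw [Chebyshev.psi_eq_zero_of_le_one, zero_mul]
          exact exp_le_one_iff.mpr (not_lt.mp hu)
        rw [this, zero_mul]
    · refine ContinuousOn.div ((hF.comp (by fun_prop) fun w hw => ?_).sub continuousOn_const)
        (by fun_prop) fun w hw h => ?_
      · simpa using hw
      · have h1 := congrArg Complex.re h
        have h2 : 0 ≤ w.re := hw
        simp at h1
        linarith
    · intro w hw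
      have hw0 : w ≠ 0 := fun h => by rw [h] at hw; simp at hw
      have hw1 : 1 + w ≠ 0 := fun h => by
        have h1 := congrArg Complex.re h
        simp at h1
        linarith
      have hexp : IntegrableOn (fun u : ℝ => Complex.exp (-w * u)) (Set.Ioi 0) :=
        integrableOn_exp_mul_complex_Ioi (by simpa using hw) 0
      have hBexp : IntegrableOn (fun u : ℝ => (B u : ℂ) * Complex.exp (-w * u)) (Set.Ioi 0) := by
        refine hexp.bdd_mul (c := Real.log 4 + 4) (by fun_prop) (ae_of_all _ fun u => ?_)
        rw [Complex.norm_real, norm_of_nonneg (hB0 u)]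
        exact hBC u
      have : ∀ u : ℝ, ((B u - 1 : ℝ) : ℂ) * Complex.exp (-w * u) =
          (B u : ℂ) * Complex.exp (-w * u) - Complex.exp (-w * u) := by
        intro u; push_cast; ring
      simp_rw [this]
      rw [integral_sub hBexp hexp, integral_psi_exp_mul_exp w hw, hFe _ (by simpa using hw),
        integral_exp_mul_complex_Ioi (by simpa using hw)]
      simp
      field_simp
      ring

/-- The **prime number theorem** for the Chebyshev function `θ`. -/
lemma tendsto_theta_div_self : Tendsto (fun x => Chebyshev.theta x / x) atTop (𝓝 1) := by
  have hpsi : Tendsto (fun x => Chebyshev.psi x / x) atTop (𝓝 1) := by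
    refine (tendsto_psi_exp_mul_exp_neg.comp tendsto_log_atTop).congr' ?_
    filter_upwards [eventually_gt_atTop 0] with x hx
    simp only [Function.comp_apply]
    rw [exp_neg, exp_log hx, div_eq_mul_inv]
  have hdiff : Tendsto (fun x => (Chebyshev.psi x - Chebyshev.theta x) / x) atTop (𝓝 0) := by
    have h1 : Asymptotics.IsLittleO atTop Real.sqrt (fun x : ℝ => x) := by
      refine (Asymptotics.isLittleO_iff_tendsto' ?_).mpr ?_
      · filter_upwards [eventually_gt_atTop 0] with x hx h0
        exact absurd h0 hx.ne'
      · simp_rw [sqrt_div_self]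
        exact tendsto_sqrt_atTop.inv_tendsto_atTop.congr fun x => by simp
    exact (Chebyshev.isBigO_psi_sub_theta_sqrt.trans_isLittleO h1).tendsto_div_nhds_zero
  have := hpsi.sub hdiff
  rw [sub_zero] at this
  exact this.congr fun x => by ring

/-- The summand `log p / p` of the first theorem of Mertens. -/
noncomputable def mertensTerm (k : ℕ) : ℝ := if k.Prime then log k / k else 0

lemma sum_mertensTerm (n : ℕ) :
    ∑ k ∈ Finset.Icc 0 n, mertensTerm k = ∑ p ∈ n.primesLE, log p / p := by
  simp only [mertensTerm, ← Finset.sum_filter]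
  refine Finset.sum_congr ?_ fun _ _ => rfl
  ext p
  simp [Nat.mem_primesLE]

lemma log_factorial_eq_sum_primesLE (n : ℕ) :
    log (n.factorial : ℝ) = ∑ p ∈ n.primesLE, (n.factorial.factorization p : ℝ) * log p := by
  rw [log_nat_eq_sum_factorization]
  refine Finsupp.sum_of_support_subset _ (fun p hp => ?_) _ (by simp)
  rw [Nat.support_factorization, Nat.mem_primeFactors] at hp
  exact Nat.mem_primesLE.mpr ⟨(hp.1.dvd_factorial).mp hp.2.1, hp.1⟩

lemma div_sub_one_le_factorization_factorial {p : ℕ} (hp : p.Prime) (n : ℕ) :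
    (n : ℝ) / p - 1 ≤ n.factorial.factorization p := by
  have h1 : n / p ≤ n.factorial.factorization p := by
    rw [Nat.factorization_factorial hp (b := Nat.log p n + 2) (by omega)]
    have := Finset.single_le_sum (f := fun i => n / p ^ i) (s := Finset.Ico 1 (Nat.log p n + 2))
      (fun i _ => Nat.zero_le _) (a := 1) (by simp)
    simpa using this
  have h2 := Nat.lt_floor_add_one ((n : ℝ) / p)
  rw [Nat.floor_div_eq_div] at h2
  have h3 : ((n / p : ℕ) : ℝ) ≤ n.factorial.factorization p := by exact_mod_cast h1
  linarith

lemma factorization_factorial_le_div {p : ℕ} (hp : p.Prime) (n : ℕ) :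
    (n.factorial.factorization p : ℝ) ≤ n / ((p : ℝ) - 1) := by
  have h1 := Nat.sub_one_mul_factorization_factorial (n := n) hp
  have h2 : (p - 1) * n.factorial.factorization p ≤ n := h1.trans_le (Nat.sub_le _ _)
  have hp1 : (1 : ℝ) < p := by exact_mod_cast hp.one_lt
  rw [le_div_iff₀ (by linarith), mul_comm]
  have : (((p - 1) * n.factorial.factorization p : ℕ) : ℝ) ≤ n := by exact_mod_cast h2
  rwa [Nat.cast_mul, Nat.cast_sub hp.one_lt.le, Nat.cast_one] at this

lemma exists_sum_log_div_bound :
    ∃ C : ℝ, ∀ s : Finset ℕ, (∀ p ∈ s, p.Prime) →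
      ∑ p ∈ s, log p * (1 / ((p : ℝ) - 1) - 1 / p) ≤ C := by
  have hsum : Summable fun n : ℕ => 4 * ((n : ℝ) ^ (3 / 2 : ℝ))⁻¹ :=
    (Real.summable_nat_rpow_inv.mpr (by norm_num)).mul_left 4
  refine ⟨∑' n : ℕ, 4 * ((n : ℝ) ^ (3 / 2 : ℝ))⁻¹, fun s hs => ?_⟩
  refine (Finset.sum_le_sum fun p hp => ?_).trans
    (hsum.sum_le_tsum s fun n _ => by positivity)
  have hp2 : (2 : ℝ) ≤ p := by exact_mod_cast (hs p hp).two_le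
  have hlog : log p ≤ (p : ℝ) ^ (1 / 2 : ℝ) / (1 / 2) :=
    log_le_rpow_div (by linarith) (by norm_num)
  have hpow : (p : ℝ) ^ (3 / 2 : ℝ) * (p : ℝ) ^ (1 / 2 : ℝ) = (p : ℝ) ^ 2 := by
    rw [← rpow_add (by linarith), ← rpow_natCast]; norm_num
  have hfrac : 1 / ((p : ℝ) - 1) - 1 / p ≤ 2 / (p : ℝ) ^ 2 := by
    rw [div_sub_div _ _ (by linarith) (by linarith), div_le_div_iff₀ (by nlinarith) (by positivity)]
    nlinarith
  have hpos : 0 < (p : ℝ) ^ (1 / 2 : ℝ) := by positivity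
  have hpos' : 0 < (p : ℝ) ^ (3 / 2 : ℝ) := by positivity
  calc log p * (1 / ((p : ℝ) - 1) - 1 / p)
      ≤ log p * (2 / (p : ℝ) ^ 2) := by
        gcongr
    _ ≤ ((p : ℝ) ^ (1 / 2 : ℝ) / (1 / 2)) * (2 / (p : ℝ) ^ 2) := by gcongr
    _ = 4 * ((p : ℝ) ^ (3 / 2 : ℝ))⁻¹ := by
        rw [← hpow]; field_simp; norm_num

/-- **First theorem of Mertens**. -/
lemma exists_mertens_first :
    ∃ C : ℝ, ∀ x : ℝ, 1 ≤ x → |∑ k ∈ Finset.Icc 0 ⌊x⌋₊, mertensTerm k - log x| ≤ C := by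
  obtain ⟨C, hC⟩ := exists_sum_log_div_bound
  have hC0 : 0 ≤ C := by simpa using hC ∅ (by simp)
  refine ⟨C + 1 + log 4, fun x hx => ?_⟩
  set n := ⌊x⌋₊
  have hn1 : 1 ≤ n := Nat.le_floor (by simpa using hx)
  have hn : (1 : ℝ) ≤ n := by exact_mod_cast hn1
  have hnx : (n : ℝ) ≤ x := Nat.floor_le (by linarith)
  have hxn : x ≤ 2 * n := by linarith [Nat.lt_floor_add_one x]
  have hl1 : log n ≤ log x := log_le_log (by linarith) hnx
  have hl2 : log x ≤ log 2 + log n := by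
    rw [← log_mul (by norm_num) (by linarith)]
    exact log_le_log (by linarith) hxn
  have hfac1 : log (n.factorial : ℝ) ≤ n * log n := by
    rw [← log_pow]
    exact log_le_log (by positivity) (by exact_mod_cast Nat.factorial_le_pow n)
  have hfac2 : n * log n - n ≤ log (n.factorial : ℝ) := by
    have h := pow_div_factorial_le_exp (n : ℝ) (by linarith) n
    have h' := log_le_log (by positivity) h
    rw [log_div (by positivity) (by positivity), log_pow, log_exp] at h'
    linarith
  have hprime : ∀ p ∈ n.primesLE, p.Prime := fun p hp => (Nat.mem_primesLE.mp hp).2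
  rw [sum_mertensTerm]
  set S := ∑ p ∈ n.primesLE, log p / p
  have hupper : n * S - Chebyshev.theta n ≤ log (n.factorial : ℝ) := by
    rw [log_factorial_eq_sum_primesLE, Chebyshev.theta_eq_sum_primesLE_log, Finset.mul_sum,
      ← Finset.sum_sub_distrib]
    refine Finset.sum_le_sum fun p hp => ?_
    have h1 := div_sub_one_le_factorization_factorial (hprime p hp) n
    have h2 := mul_le_mul_of_nonneg_right h1 (log_natCast_nonneg p)
    calc n * (log p / p) - log p = ((n : ℝ) / p - 1) * log p := by ring
      _ ≤ _ := h2
  have hlower : log (n.factorial : ℝ) ≤ n * (S + C) := by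
    have h3 : log (n.factorial : ℝ) ≤ n * (S + ∑ p ∈ n.primesLE,
        log p * (1 / ((p : ℝ) - 1) - 1 / p)) := by
      rw [log_factorial_eq_sum_primesLE, ← Finset.sum_add_distrib, Finset.mul_sum]
      refine Finset.sum_le_sum fun p hp => ?_
      have h1 := factorization_factorial_le_div (hprime p hp) n
      have h2 := mul_le_mul_of_nonneg_right h1 (log_natCast_nonneg p)
      calc _ ≤ _ := h2
        _ = _ := by ring
    refine h3.trans ?_
    have := hC _ hprime
    gcongr
  have htheta := Chebyshev.theta_le_log4_mul_x (x := n) (by linarith)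
  have hu : S ≤ log n + log 4 := by
    have : n * S ≤ n * (log n + log 4) := by linarith
    exact le_of_mul_le_mul_left this (by linarith)
  have hlo : log n - 1 - C ≤ S := by
    have : n * (log n - 1 - C) ≤ n * S := by linarith
    exact le_of_mul_le_mul_left this (by linarith)
  have h24 : log 2 ≤ log 4 := log_le_log (by norm_num) (by norm_num)
  rw [abs_le]
  constructor <;> linarith

/-- **Second theorem of Mertens** on intervals. -/
lemma exists_mertens_second :
    ∃ C : ℝ, 0 ≤ C ∧ ∀ w t : ℝ, 2 ≤ w → w ≤ t →
      |∑ p ∈ primesBetween w t, 1 / (p : ℝ) - (log (log t) - log (log w))| ≤ C / log w := by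
  obtain ⟨C, hC⟩ := exists_mertens_first
  have hC0 : 0 ≤ C := (abs_nonneg _).trans (hC 1 le_rfl)
  refine ⟨2 * C, by positivity, fun w t hw hwt => ?_⟩
  have hlogpos : ∀ u ∈ Set.Icc w t, 0 < log u := fun u hu => log_pos (by linarith [hu.1])
  have hd : ∀ u ∈ Set.Icc w t, HasDerivAt (fun u => (log u)⁻¹) (-u⁻¹ / log u ^ 2) u :=
    fun u hu => (hasDerivAt_log (by linarith [hu.1])).inv (hlogpos u hu).ne'
  have hcont : ContinuousOn (fun u : ℝ => -u⁻¹ / log u ^ 2) (Set.Icc w t) := by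
    refine ContinuousOn.div ((continuousOn_inv₀.mono ?_).neg)
      ((continuousOn_log.mono ?_).pow 2) fun u hu => pow_ne_zero 2 (hlogpos u hu).ne'
    all_goals intro u hu; simpa using (by linarith [hu.1] : u ≠ 0)
  have hderiv : Set.EqOn (deriv fun u => (log u)⁻¹) (fun u => -u⁻¹ / log u ^ 2) (Set.Icc w t) :=
    fun u hu => (hd u hu).deriv
  have habel := sum_mul_eq_sub_sub_integral_mul mertensTerm (f := fun u => (log u)⁻¹)
    (by linarith) hwt (fun u hu => (hd u hu).differentiableAt)
    (hcont.integrableOn_Icc.congr_fun hderiv.symm measurableSet_Icc)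
  have hsum : ∑ k ∈ Finset.Ioc ⌊w⌋₊ ⌊t⌋₊, (log k)⁻¹ * mertensTerm k =
      ∑ p ∈ primesBetween w t, 1 / (p : ℝ) := by
    have hset : primesBetween w t = (Finset.Ioc ⌊w⌋₊ ⌊t⌋₊).filter Nat.Prime := by
      ext p
      simp only [primesBetween, Finset.mem_filter, Finset.mem_range, Finset.mem_Ioc,
        Nat.floor_lt (show 0 ≤ w by linarith), Nat.lt_succ_iff,
        Nat.le_floor_iff (show 0 ≤ t by linarith)]
      tauto
    rw [hset, Finset.sum_filter]
    refine Finset.sum_congr rfl fun k _ => ?_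
    unfold mertensTerm
    split_ifs with hk
    · have : log k ≠ 0 := (log_pos (by exact_mod_cast hk.one_lt)).ne'
      field_simp
    · simp
  rw [hsum] at habel
  have hintegrable1 : IntegrableOn (fun u => -u⁻¹ / log u ^ 2 * ∑ k ∈ Finset.Icc 0 ⌊u⌋₊, mertensTerm k)
      (Set.Ioc w t) :=
    (integrableOn_mul_sum_Icc mertensTerm (by linarith) hcont.integrableOn_Icc).mono_set
      Set.Ioc_subset_Icc_self
  have hcontlog : ContinuousOn (fun u : ℝ => -u⁻¹ / log u ^ 2 * log u) (Set.Icc w t) :=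
    hcont.mul (continuousOn_log.mono fun u hu => by
      simpa using (by linarith [hu.1] : u ≠ 0))
  have hintegrable2 : IntegrableOn (fun u => -u⁻¹ / log u ^ 2 * log u) (Set.Ioc w t) :=
    hcontlog.integrableOn_Icc.mono_set Set.Ioc_subset_Icc_self
  have hI2 : ∫ u in Set.Ioc w t, -u⁻¹ / log u ^ 2 * log u = log (log w) - log (log t) := by
    rw [← intervalIntegral.integral_of_le hwt]
    have hdd : ∀ u ∈ Set.uIcc w t,
        HasDerivAt (fun u => -log (log u)) (-u⁻¹ / log u ^ 2 * log u) u := by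
      intro u hu
      rw [Set.uIcc_of_le hwt] at hu
      have h0 := hlogpos u hu
      refine (((hasDerivAt_log (by linarith [hu.1])).log h0.ne').neg).congr_deriv ?_
      field_simp
    rw [intervalIntegral.integral_eq_sub_of_hasDerivAt hdd]
    · ring
    · rw [intervalIntegrable_iff_integrableOn_Ioc_of_le hwt]; exact hintegrable2
  have hintegrable3 : IntegrableOn (fun u : ℝ => u⁻¹ / log u ^ 2) (Set.Ioc w t) := by
    have := (hcont.neg.integrableOn_Icc (μ := volume)).mono_set
      (Set.Ioc_subset_Icc_self (a := w) (b := t))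
    refine this.congr_fun (fun u _ => ?_) measurableSet_Ioc
    simp only [Pi.neg_apply]
    ring
  have hI3 : ∫ u in Set.Ioc w t, u⁻¹ / log u ^ 2 = (log w)⁻¹ - (log t)⁻¹ := by
    rw [← intervalIntegral.integral_of_le hwt]
    have hdd : ∀ u ∈ Set.uIcc w t, HasDerivAt (fun u => -(log u)⁻¹) (u⁻¹ / log u ^ 2) u := by
      intro u hu
      rw [Set.uIcc_of_le hwt] at hu
      refine (hd u hu).neg.congr_deriv (by ring)
    rw [intervalIntegral.integral_eq_sub_of_hasDerivAt hdd]
    · ring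
    · rw [intervalIntegrable_iff_integrableOn_Ioc_of_le hwt]; exact hintegrable3
  have hIR : |(∫ u in Set.Ioc w t, -u⁻¹ / log u ^ 2 * ∑ k ∈ Finset.Icc 0 ⌊u⌋₊, mertensTerm k) -
      (log (log w) - log (log t))| ≤ C * ((log w)⁻¹ - (log t)⁻¹) := by
    rw [← hI2, ← integral_sub hintegrable1 hintegrable2, ← hI3, ← integral_const_mul, ← Real.norm_eq_abs]
    refine norm_integral_le_of_norm_le (hintegrable3.const_mul C) ?_
    filter_upwards [ae_restrict_mem measurableSet_Ioc] with u hu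
    have hu1 : 1 ≤ u := by linarith [hu.1]
    rw [← mul_sub, norm_mul, Real.norm_eq_abs, Real.norm_eq_abs, neg_div, abs_neg,
      abs_of_nonneg (by positivity), mul_comm]
    exact mul_le_mul_of_nonneg_right (hC u hu1) (by positivity)
  rw [setIntegral_congr_fun measurableSet_Ioc
    (g := fun u => -u⁻¹ / log u ^ 2 * ∑ k ∈ Finset.Icc 0 ⌊u⌋₊, mertensTerm k)
    (fun u hu => by simp only; rw [hderiv (Set.Ioc_subset_Icc_self hu)])] at habel
  have hw0 := hlogpos w ⟨le_rfl, hwt⟩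
  have ht0 := hlogpos t ⟨hwt, le_rfl⟩
  have hRw := abs_le.mp (hC w (by linarith))
  have hRt := abs_le.mp (hC t (by linarith))
  have hIRbounds := abs_le.mp hIR
  set Sw := ∑ k ∈ Finset.Icc 0 ⌊w⌋₊, mertensTerm k
  set St := ∑ k ∈ Finset.Icc 0 ⌊t⌋₊, mertensTerm k
  have e1 : (log t)⁻¹ * St = 1 + (log t)⁻¹ * (St - log t) := by field_simp; ring
  have e2 : (log w)⁻¹ * Sw = 1 + (log w)⁻¹ * (Sw - log w) := by field_simp; ring
  have iw : 0 < (log w)⁻¹ := by positivity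
  have it : 0 < (log t)⁻¹ := by positivity
  have b1 := mul_le_mul_of_nonneg_left hRt.1 it.le
  have b2 := mul_le_mul_of_nonneg_left hRt.2 it.le
  have b3 := mul_le_mul_of_nonneg_left hRw.1 iw.le
  have b4 := mul_le_mul_of_nonneg_left hRw.2 iw.le
  rw [habel, e1, e2, abs_le, div_eq_mul_inv]
  constructor <;> nlinarith [hIRbounds.1, hIRbounds.2]

/-- **Third theorem of Mertens** on intervals: the sifting density `σ_{w,t}` is asymptotic to
`log w / log t`, uniformly in `t`. -/
lemma exists_mertens_third {η : ℝ} (hη : 0 < η) :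
    ∃ W : ℝ, 2 ≤ W ∧ ∀ w t : ℝ, W ≤ w → w ≤ t →
      |(sigBetween w t)⁻¹ * (log w / log t) - 1| ≤ η := by
  obtain ⟨C, hC0, hC⟩ := exists_mertens_second
  obtain ⟨κ, hκ, hexp⟩ : ∃ κ > 0, ∀ e : ℝ, |e| < κ → |exp e - 1| ≤ η := by
    have h := Metric.continuousAt_iff.mp (continuous_exp.continuousAt (x := 0)) η hη
    obtain ⟨κ, hκ, h⟩ := h
    refine ⟨κ, hκ, fun e he => ?_⟩
    have := h (x := e) (by simpa [Real.dist_eq] using he)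
    rw [Real.dist_eq, exp_zero] at this
    exact this.le
  have hlim : Tendsto (fun w : ℝ => C / log w + (w - 1)⁻¹) atTop (𝓝 0) := by
    have h1 := tendsto_log_atTop.const_div_atTop C
    have h2 : Tendsto (fun w : ℝ => (w - 1)⁻¹) atTop (𝓝 0) :=
      (tendsto_atTop_add_const_right atTop (-1) tendsto_id).inv_tendsto_atTop
    simpa using h1.add h2
  obtain ⟨W, hW⟩ := eventually_atTop.mp (hlim.eventually_lt_const hκ)
  refine ⟨max W 2, le_max_right _ _, fun w t hw hwt => ?_⟩
  have hw2 : 2 ≤ w := (le_max_right _ _).trans hw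
  have hbound := hW w ((le_max_left _ _).trans hw)
  have hmem : ∀ p ∈ primesBetween w t, p.Prime ∧ w < (p : ℝ) := fun p hp => by
    have := (Finset.mem_filter.mp hp).2
    exact ⟨this.1, this.2.1⟩
  have hfac : ∀ p ∈ primesBetween w t, 0 < 1 - 1 / (p : ℝ) := by
    intro p hp
    have h2 : 1 < (p : ℝ) := by linarith [(hmem p hp).2]
    rw [sub_pos, div_lt_one (by linarith)]
    exact h2
  have hsig : 0 < sigBetween w t := Finset.prod_pos hfac
  have hlw : 0 < log w := log_pos (by linarith)
  have hlt : 0 < log t := log_pos (by linarith)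
  have hlogsig : -log (sigBetween w t) = ∑ p ∈ primesBetween w t, -log (1 - 1 / (p : ℝ)) := by
    rw [sigBetween, log_prod (fun p hp => (hfac p hp).ne'), Finset.sum_neg_distrib]
  have hd1 : ∀ p ∈ primesBetween w t, 1 / (p : ℝ) ≤ -log (1 - 1 / (p : ℝ)) := by
    intro p hp
    have := log_le_sub_one_of_pos (hfac p hp)
    linarith
  have hd2 : ∀ p ∈ primesBetween w t,
      -log (1 - 1 / (p : ℝ)) ≤ 1 / (p : ℝ) + (1 / ((p : ℝ) - 1) - 1 / p) := by
    intro p hp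
    have h2 : 1 < (p : ℝ) := by linarith [(hmem p hp).2]
    have h3 := log_le_sub_one_of_pos (inv_pos.mpr (hfac p hp))
    rw [log_inv] at h3
    have h4 : (1 - 1 / (p : ℝ))⁻¹ - 1 = 1 / ((p : ℝ) - 1) := by
      have : (p : ℝ) - 1 ≠ 0 := by linarith
      have : (p : ℝ) ≠ 0 := by linarith
      field_simp
      ring
    linarith
  have htel : ∑ p ∈ primesBetween w t, (1 / ((p : ℝ) - 1) - 1 / p) ≤ (w - 1)⁻¹ := by
    have hn1 : 2 ≤ ⌊w⌋₊ := Nat.le_floor (by exact_mod_cast hw2)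
    have hmono : ⌊w⌋₊ ≤ ⌊t⌋₊ := Nat.floor_le_floor hwt
    have hsub : primesBetween w t ⊆ Finset.Ico (⌊w⌋₊ + 1) (⌊t⌋₊ + 1) := by
      intro p hp
      have h := Finset.mem_filter.mp hp
      rw [Finset.mem_Ico]
      exact ⟨(Nat.floor_lt (by linarith)).mpr h.2.2.1, Finset.mem_range.mp h.1⟩
    refine (Finset.sum_le_sum_of_subset_of_nonneg hsub fun n hn _ => ?_).trans ?_
    · have : (2 : ℝ) < n := by
        have := (Finset.mem_Ico.mp hn).1
        exact_mod_cast (by omega : 2 < n)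
      rw [sub_nonneg]
      exact one_div_le_one_div_of_le (by linarith) (by linarith)
    · have : ∑ n ∈ Finset.Ico (⌊w⌋₊ + 1) (⌊t⌋₊ + 1), (1 / ((n : ℝ) - 1) - 1 / n) =
          1 / (⌊w⌋₊ : ℝ) - 1 / (⌊t⌋₊ : ℝ) := by
        have h := Finset.sum_Ico_sub (fun n : ℕ => -(1 / ((n : ℝ) - 1)))
          (show ⌊w⌋₊ + 1 ≤ ⌊t⌋₊ + 1 by omega)
        simp only [Nat.cast_add, Nat.cast_one, add_sub_cancel_right] at h
        calc _ = _ := Finset.sum_congr rfl fun n _ => by ring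
          _ = _ := h
          _ = _ := by ring
      rw [this]
      have h1 : 0 ≤ 1 / (⌊t⌋₊ : ℝ) := by positivity
      have h2 : 1 / (⌊w⌋₊ : ℝ) ≤ (w - 1)⁻¹ := by
        rw [one_div]
        exact inv_anti₀ (by linarith) (by linarith [Nat.lt_floor_add_one w])
      linarith
  have hs1 := Finset.sum_le_sum hd1
  have hs2 := Finset.sum_le_sum hd2
  rw [← hlogsig] at hs1 hs2
  rw [Finset.sum_add_distrib] at hs2
  have hmert := abs_le.mp (hC w t hw2 hwt)
  have hE : (sigBetween w t)⁻¹ * (log w / log t) =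
      exp (-log (sigBetween w t) - (log (log t) - log (log w))) := by
    rw [exp_sub, exp_sub, exp_neg, exp_log hsig, exp_log hlw, exp_log hlt]
    field_simp
  rw [hE]
  have hpos : 0 < (w - 1)⁻¹ := inv_pos.mpr (by linarith)
  refine hexp _ (abs_lt.mpr ⟨?_, ?_⟩) <;> linarith [hmert.1, hmert.2]

lemma sum_log_primesBetween {w t : ℝ} (hw : 0 ≤ w) (hwt : w ≤ t) :
    ∑ p ∈ primesBetween w t, log p = Chebyshev.theta t - Chebyshev.theta w := by
  have hsub : (Finset.Ioc 0 ⌊w⌋₊).filter Nat.Prime ⊆ (Finset.Ioc 0 ⌊t⌋₊).filter Nat.Prime :=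
    Finset.filter_subset_filter _ (Finset.Ioc_subset_Ioc_right (Nat.floor_le_floor hwt))
  rw [Chebyshev.theta, Chebyshev.theta, eq_sub_iff_add_eq]
  have hset : primesBetween w t =
      (Finset.Ioc 0 ⌊t⌋₊).filter Nat.Prime \ (Finset.Ioc 0 ⌊w⌋₊).filter Nat.Prime := by
    ext p
    simp only [primesBetween, Finset.mem_filter, Finset.mem_range, Finset.mem_Ioc,
      Finset.mem_sdiff, Nat.le_floor_iff hw,
      Nat.le_floor_iff (hw.trans hwt), ← not_le]
    have := fun h : p.Prime => h.pos
    have := Nat.le_floor_iff (n := p) (hw.trans hwt)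
    grind
  rw [hset]
  convert Finset.sum_sdiff hsub using 3

/-- The prime number theorem on the intervals `(X / ξ, X]`. -/
lemma tendsto_card_primesBetween {ξ : ℝ} (hξ : 1 < ξ) :
    Tendsto (fun X : ℝ => ((primesBetween (X / ξ) X).card : ℝ) * log X / X) atTop
      (𝓝 (1 - 1 / ξ)) := by
  have hξ0 : 0 < ξ := by linarith
  have hθ : Tendsto (fun X => (Chebyshev.theta X - Chebyshev.theta (X / ξ)) / X) atTop
      (𝓝 (1 - 1 / ξ)) := by
    have h1 := tendsto_theta_div_self.comp (tendsto_id.atTop_div_const hξ0)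
    have h2 := tendsto_theta_div_self.sub (h1.div_const ξ)
    refine h2.congr' ?_
    filter_upwards [eventually_gt_atTop 0] with X hX
    simp only [Function.comp_apply, id]
    field_simp
  have hlog : Tendsto (fun X => log X / log (X / ξ)) atTop (𝓝 1) := by
    have h1 : Tendsto (fun X => 1 + log ξ / log (X / ξ)) atTop (𝓝 (1 + 0)) :=
      tendsto_const_nhds.add ((tendsto_log_atTop.comp
        (tendsto_id.atTop_div_const hξ0)).const_div_atTop (log ξ))
    rw [add_zero] at h1
    refine h1.congr' ?_
    filter_upwards [eventually_gt_atTop ξ] with X hX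
    have h2 : 0 < log (X / ξ) := log_pos ((one_lt_div hξ0).mpr hX)
    have h3 : log X = log (X / ξ) + log ξ := by
      rw [log_div (by linarith) hξ0.ne']; ring
    rw [h3]
    field_simp
  have hup := hθ.mul hlog
  rw [mul_one] at hup
  refine tendsto_of_tendsto_of_tendsto_of_le_of_le' hθ hup ?_ ?_
  · filter_upwards [eventually_gt_atTop ξ] with X hX
    have hX0 : 0 < X := by linarith
    rw [← sum_log_primesBetween (by positivity) (div_le_self hX0.le hξ.le)]
    gcongr
    rw [← nsmul_eq_mul]
    refine Finset.sum_le_card_nsmul _ _ _ fun p hp => ?_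
    have := (Finset.mem_filter.mp hp).2
    exact log_le_log (by exact_mod_cast this.1.pos) this.2.2
  · filter_upwards [eventually_gt_atTop ξ] with X hX
    have hX0 : 0 < X := by linarith
    have h2 : 0 < log (X / ξ) := log_pos ((one_lt_div hξ0).mpr hX)
    have h3 : 0 < log X := log_pos (by linarith)
    have h4 : ((primesBetween (X / ξ) X).card : ℝ) * log (X / ξ) ≤
        Chebyshev.theta X - Chebyshev.theta (X / ξ) := by
      rw [← sum_log_primesBetween (by positivity) (div_le_self hX0.le hξ.le), ← nsmul_eq_mul]
      refine Finset.card_nsmul_le_sum _ _ _ fun p hp => ?_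
      have := (Finset.mem_filter.mp hp).2
      exact log_le_log (by positivity) this.2.1.le
    calc _ = ((primesBetween (X / ξ) X).card : ℝ) * log (X / ξ) / X * (log X / log (X / ξ)) := by
          field_simp
      _ ≤ _ := by gcongr

/-- Summation over a residue class modulo two, between two real bounds. -/
lemma tsum_ite_mod_two_eq_sum {e : ℕ} (he : e < 2) {a b : ℝ} (hb : 1 ≤ b) (F : ℕ → ℝ) :
    ∑' j : ℕ, (if j % 2 = e ∧ a ≤ j ∧ j ≤ b then F j else 0) =
      ∑ i ∈ Finset.Ico ⌈(a - e) / 2⌉₊ (⌊(b - e) / 2⌋₊ + 1), F (2 * i + e) := by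
  have heb : (e : ℝ) ≤ b := le_trans (by exact_mod_cast Nat.le_of_lt_succ he) hb
  have hmem : ∀ i : ℕ, i ∈ Finset.Ico ⌈(a - e) / 2⌉₊ (⌊(b - e) / 2⌋₊ + 1) ↔
      a ≤ ((2 * i + e : ℕ) : ℝ) ∧ ((2 * i + e : ℕ) : ℝ) ≤ b := by
    intro i
    rw [Finset.mem_Ico, Nat.ceil_le, Nat.lt_succ_iff, Nat.le_floor_iff (by linarith)]
    push_cast
    constructor <;> rintro ⟨h1, h2⟩ <;> constructor <;> linarith
  have hinj : Function.Injective fun i : ℕ => 2 * i + e := fun i k h => by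
    simp only at h; omega
  rw [tsum_eq_sum (s := (Finset.Ico ⌈(a - e) / 2⌉₊ (⌊(b - e) / 2⌋₊ + 1)).image
    fun i => 2 * i + e), Finset.sum_image hinj.injOn]
  · refine Finset.sum_congr rfl fun i hi => if_pos ⟨by omega, (hmem i).mp hi⟩
  · intro j hj
    refine if_neg fun h => hj ?_
    have hj2 : 2 * (j / 2) + e = j := by omega
    rw [Finset.mem_image]
    exact ⟨j / 2, (hmem _).mpr (by rw [hj2]; exact h.2), hj2⟩

lemma log_sub_log_le_div {u v : ℝ} (hu : 0 < u) (hv : 0 < v) : log v - log u ≤ (v - u) / u := by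
  have := log_le_sub_one_of_pos (div_pos hv hu)
  rw [log_div hv.ne' hu.ne'] at this
  rwa [sub_div, div_self (ne_of_gt hu)]

/-- Bounds for the harmonic sum over a residue class modulo two. -/
lemma sum_inv_mod_two_bounds {e : ℕ} (he : e < 2) {a b : ℝ} (ha : 4 ≤ a) (hab : a + 2 ≤ b) :
    (log b - log (a + 2)) / 2 ≤
        ∑ i ∈ Finset.Ico ⌈(a - e) / 2⌉₊ (⌊(b - e) / 2⌋₊ + 1), 1 / ((2 * i + e : ℕ) : ℝ) ∧
      ∑ i ∈ Finset.Ico ⌈(a - e) / 2⌉₊ (⌊(b - e) / 2⌋₊ + 1), 1 / ((2 * i + e : ℕ) : ℝ) ≤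
        (log b - log (a - 2)) / 2 := by
  have he1 : (e : ℝ) ≤ 1 := by exact_mod_cast Nat.le_of_lt_succ he
  have he0 : (0 : ℝ) ≤ e := by positivity
  set m := ⌈(a - e) / 2⌉₊
  set n := ⌊(b - e) / 2⌋₊
  have hm1 : (a - e) / 2 ≤ m := Nat.le_ceil _
  have hm2 : (m : ℝ) < (a - e) / 2 + 1 := Nat.ceil_lt_add_one (by linarith)
  have hn1 : (n : ℝ) ≤ (b - e) / 2 := Nat.floor_le (by linarith)
  have hn2 : (b - e) / 2 < n + 1 := Nat.lt_floor_add_one _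
  have hmn : m ≤ n + 1 := by
    have : (m : ℝ) ≤ (n + 1 : ℕ) := by push_cast; linarith
    exact_mod_cast this
  have hi : ∀ i ∈ Finset.Ico m (n + 1), (3 / 2 : ℝ) ≤ i := fun i hi => by
    have : (m : ℝ) ≤ i := by exact_mod_cast (Finset.mem_Ico.mp hi).1
    linarith
  constructor
  · have htel := Finset.sum_Ico_sub (fun i : ℕ => log (2 * i + e) / 2) hmn
    have hle : ∑ i ∈ Finset.Ico m (n + 1),
        (log (2 * ((i + 1 : ℕ) : ℝ) + e) / 2 - log (2 * (i : ℝ) + e) / 2) ≤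
        ∑ i ∈ Finset.Ico m (n + 1), 1 / ((2 * i + e : ℕ) : ℝ) := by
      refine Finset.sum_le_sum fun i h => ?_
      have h1 := hi i h
      have := log_sub_log_le_div (u := 2 * (i : ℝ) + e) (v := 2 * ((i + 1 : ℕ) : ℝ) + e)
        (by linarith) (by positivity)
      push_cast at this ⊢
      have h2 : (2 * ((i : ℝ) + 1) + e - (2 * i + e)) / (2 * i + e) = 2 * (1 / (2 * i + e)) := by
        ring
      linarith
    rw [htel] at hle
    have h1 : log b ≤ log (2 * ((n + 1 : ℕ) : ℝ) + e) :=
      log_le_log (by linarith) (by push_cast; linarith)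
    have h2 : log (2 * (m : ℝ) + e) ≤ log (a + 2) := log_le_log (by linarith) (by linarith)
    linarith
  · have htel := Finset.sum_Ico_sub (fun i : ℕ => log (2 * i + e - 2) / 2) hmn
    have hle : ∑ i ∈ Finset.Ico m (n + 1), 1 / ((2 * i + e : ℕ) : ℝ) ≤
        ∑ i ∈ Finset.Ico m (n + 1),
        (log (2 * ((i + 1 : ℕ) : ℝ) + e - 2) / 2 - log (2 * (i : ℝ) + e - 2) / 2) := by
      refine Finset.sum_le_sum fun i h => ?_
      have h1 := hi i h
      have := log_sub_log_le_div (u := 2 * ((i + 1 : ℕ) : ℝ) + e - 2) (v := 2 * (i : ℝ) + e - 2)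
        (by push_cast; linarith) (by linarith)
      push_cast at this ⊢
      have h2 : (2 * (i : ℝ) + e - 2 - (2 * (i + 1) + e - 2)) / (2 * (i + 1) + e - 2) =
          - (2 * (1 / (2 * i + e))) := by
        rw [show 2 * ((i : ℝ) + 1) + e - 2 = 2 * i + e by ring]
        ring
      linarith
    rw [htel] at hle
    have h1 : log (2 * ((n + 1 : ℕ) : ℝ) + e - 2) ≤ log b :=
      log_le_log (by push_cast; linarith) (by push_cast; linarith)
    have h2 : log (a - 2) ≤ log (2 * (m : ℝ) + e - 2) := log_le_log (by linarith) (by linarith)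
    linarith

section Asymptotics

variable {δ : ℝ}

lemma tendsto_log_log_atTop : Tendsto (fun x : ℝ => log (log x)) atTop atTop :=
  tendsto_log_atTop.comp tendsto_log_atTop

lemma tendsto_log_div_self_atTop : Tendsto (fun x : ℝ => log x / x) atTop (𝓝 0) :=
  isLittleO_log_id_atTop.tendsto_div_nhds_zero

/-- The rounding error of `yy` on a logarithmic scale. -/
noncomputable def yyError (δ x : ℝ) : ℝ := log (yy δ x) - log x - δ * log (log x)

lemma eventually_le_yy (hδ : 0 < δ) : ∀ᶠ x : ℝ in atTop, x ≤ yy δ x := by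
  filter_upwards [tendsto_log_atTop.eventually_ge_atTop 1, eventually_gt_atTop 0] with x hx h0
  exact (le_mul_of_one_le_right h0.le (one_le_rpow hx hδ.le)).trans (Nat.le_ceil _)

lemma eventually_yyError_mem (hδ : 0 < δ) :
    ∀ᶠ x : ℝ in atTop, 0 ≤ yyError δ x ∧ yyError δ x ≤ log 2 := by
  filter_upwards [tendsto_log_atTop.eventually_ge_atTop 1, eventually_ge_atTop 1] with x hx h1
  have hx0 : 0 < x := by linarith
  have hp : 1 ≤ log x ^ δ := one_le_rpow hx hδ.le
  have hl : log (x * log x ^ δ) = log x + δ * log (log x) := by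
    rw [log_mul hx0.ne' (by positivity), log_rpow (by linarith)]
  have hb1 : x * log x ^ δ ≤ yy δ x := Nat.le_ceil _
  have hb2 : (yy δ x : ℝ) < x * log x ^ δ + 1 := Nat.ceil_lt_add_one (by positivity)
  have hb3 : (yy δ x : ℝ) ≤ 2 * (x * log x ^ δ) := by nlinarith
  have hpos : 0 < x * log x ^ δ := by positivity
  have h3 := log_le_log hpos hb1
  have h4 := log_le_log (hpos.trans_le hb1) hb3
  rw [log_mul (by norm_num) hpos.ne'] at h4
  unfold yyError
  constructor <;> linarith

lemma tendsto_yyError_div (hδ : 0 < δ) {f : ℝ → ℝ} (hf : Tendsto f atTop atTop) :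
    Tendsto (fun x => yyError δ x / f x) atTop (𝓝 0) := by
  refine squeeze_zero' ?_ ?_ (hf.const_div_atTop (log 2))
  · filter_upwards [eventually_yyError_mem hδ, hf.eventually_gt_atTop 0] with x hx h0
    exact div_nonneg hx.1 h0.le
  · filter_upwards [eventually_yyError_mem hδ, hf.eventually_gt_atTop 0] with x hx h0
    have := hx.2
    gcongr

lemma eventually_zz_pos (hδ : 0 < δ) : ∀ᶠ x : ℝ in atTop, 0 < zz δ x := by
  filter_upwards [eventually_le_yy hδ, tendsto_log_log_atTop.eventually_gt_atTop 0,
    tendsto_log_atTop.eventually_gt_atTop 0, eventually_gt_atTop 0] with x h1 h2 h3 h4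
  have : (0 : ℝ) < yy δ x := by linarith
  unfold zz
  positivity

lemma eventually_log_zz (hδ : 0 < δ) : ∀ᶠ x : ℝ in atTop,
    log (zz δ x) = log (yy δ x) - (log (log x) / 2 - 2 * log (log (log x))) := by
  filter_upwards [eventually_le_yy hδ, tendsto_log_log_atTop.eventually_gt_atTop 0,
    tendsto_log_atTop.eventually_gt_atTop 0, eventually_gt_atTop 0] with x h1 h2 h3 h4
  have : (0 : ℝ) < yy δ x := by linarith
  unfold zz
  rw [log_div (by positivity) (by positivity), log_mul (by positivity) (by positivity), log_pow,
    log_rpow h3]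
  push_cast
  ring

lemma tendsto_log_log_log_div : Tendsto (fun x : ℝ => log (log (log x)) / log (log x)) atTop (𝓝 0) :=
  tendsto_log_div_self_atTop.comp tendsto_log_log_atTop

lemma tendsto_log_log_div : Tendsto (fun x : ℝ => log (log x) / log x) atTop (𝓝 0) :=
  tendsto_log_div_self_atTop.comp tendsto_log_atTop

lemma tendsto_log_log_log_div_log : Tendsto (fun x : ℝ => log (log (log x)) / log x) atTop (𝓝 0) := by
  have h := tendsto_log_log_log_div.mul tendsto_log_log_div
  rw [mul_zero] at h
  refine h.congr' ?_
  filter_upwards [tendsto_log_log_atTop.eventually_gt_atTop 0] with x hx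
  field_simp

lemma tendsto_log_yy_div_log (hδ : 0 < δ) :
    Tendsto (fun x : ℝ => log (yy δ x) / log x) atTop (𝓝 1) := by
  have h := (tendsto_log_log_div.const_mul δ).add (tendsto_yyError_div hδ tendsto_log_atTop)
  have h' := h.const_add 1
  simp only [mul_zero, add_zero] at h'
  refine h'.congr' ?_
  filter_upwards [tendsto_log_atTop.eventually_gt_atTop 0] with x hx
  unfold yyError
  field_simp
  ring

lemma tendsto_log_zz_div_log (hδ : 0 < δ) :
    Tendsto (fun x : ℝ => log (zz δ x) / log x) atTop (𝓝 1) := by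
  have h := ((tendsto_log_yy_div_log hδ).sub (tendsto_log_log_div.div_const 2)).add
    (tendsto_log_log_log_div_log.const_mul 2)
  simp only [mul_zero, add_zero, zero_div, sub_zero] at h
  refine h.congr' ?_
  filter_upwards [eventually_log_zz hδ] with x hx
  rw [hx]
  ring

lemma tendsto_log_zz (hδ : 0 < δ) : Tendsto (fun x : ℝ => log (zz δ x)) atTop atTop := by
  refine (Tendsto.pos_mul_atTop one_pos (tendsto_log_zz_div_log hδ) tendsto_log_atTop).congr' ?_
  filter_upwards [tendsto_log_atTop.eventually_gt_atTop 0] with x hx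
  field_simp

lemma tendsto_zz (hδ : 0 < δ) : Tendsto (fun x : ℝ => zz δ x) atTop atTop := by
  refine (tendsto_exp_atTop.comp (tendsto_log_zz hδ)).congr' ?_
  filter_upwards [eventually_zz_pos hδ] with x hx
  exact exp_log hx

lemma tendsto_log_zz_div_log_yy (hδ : 0 < δ) :
    Tendsto (fun x : ℝ => log (zz δ x) / log (yy δ x)) atTop (𝓝 1) := by
  have h := (tendsto_log_zz_div_log hδ).div (tendsto_log_yy_div_log hδ) one_ne_zero
  rw [div_one] at h
  refine h.congr' ?_
  filter_upwards [tendsto_log_atTop.eventually_gt_atTop 0] with x hx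
  simp only [Pi.div_apply]
  rw [div_div_div_cancel_right₀ hx.ne']

lemma tendsto_log_two_mul_yy_div (hδ : 0 < δ) :
    Tendsto (fun x : ℝ => log (2 * yy δ x / x) / log (log x)) atTop (𝓝 δ) := by
  have h := ((tendsto_log_log_atTop.const_div_atTop (log 2)).add
    (tendsto_yyError_div hδ tendsto_log_log_atTop)).const_add δ
  simp only [add_zero] at h
  refine h.congr' ?_
  filter_upwards [eventually_le_yy hδ, tendsto_log_log_atTop.eventually_gt_atTop 0,
    eventually_gt_atTop 0] with x h1 h2 h3
  have : (0 : ℝ) < yy δ x := by linarith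
  rw [log_div (by positivity) (by positivity), log_mul (by positivity) (by positivity)]
  unfold yyError
  field_simp
  ring

lemma tendsto_two_mul_yy_div (hδ : 0 < δ) :
    Tendsto (fun x : ℝ => 2 * yy δ x / x) atTop atTop := by
  have hlog : Tendsto (fun x : ℝ => log (2 * yy δ x / x)) atTop atTop := by
    refine (Tendsto.pos_mul_atTop hδ (tendsto_log_two_mul_yy_div hδ)
      tendsto_log_log_atTop).congr' ?_
    filter_upwards [tendsto_log_log_atTop.eventually_gt_atTop 0] with x hx
    field_simp
  refine (tendsto_exp_atTop.comp hlog).congr' ?_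
  filter_upwards [eventually_le_yy hδ, eventually_gt_atTop 0] with x h1 h3
  have : (0 : ℝ) < yy δ x := by linarith
  exact exp_log (by positivity)

lemma eventually_log_yy_div_zz (hδ : 0 < δ) {ξ : ℝ} (hξ : 0 < ξ) : ∀ᶠ x : ℝ in atTop,
    log (yy δ x / (ξ * zz δ x)) =
      log (log x) / 2 - 2 * log (log (log x)) - log ξ := by
  filter_upwards [eventually_le_yy hδ, eventually_log_zz hδ, eventually_zz_pos hδ,
    eventually_gt_atTop 0] with x h1 h2 h3 h4
  have : (0 : ℝ) < yy δ x := by linarith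
  rw [log_div (by positivity) (by positivity), log_mul (by positivity) (by positivity), h2]
  ring

lemma tendsto_log_yy_div_zz (hδ : 0 < δ) {ξ : ℝ} (hξ : 0 < ξ) :
    Tendsto (fun x : ℝ => log (yy δ x / (ξ * zz δ x)) / log (log x)) atTop (𝓝 (1 / 2)) := by
  have h := ((tendsto_log_log_log_div.const_mul 2).add
    (tendsto_log_log_atTop.const_div_atTop (log ξ))).const_sub (1 / 2)
  simp only [mul_zero, add_zero, sub_zero] at h
  refine h.congr' ?_
  filter_upwards [eventually_log_yy_div_zz hδ hξ,
    tendsto_log_log_atTop.eventually_gt_atTop 0] with x h1 h2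
  rw [h1]
  field_simp
  ring

lemma eventually_rpow_le_zz (hδ : 0 < δ) {ξ : ℝ} (hξ : 0 < ξ) (M : ℝ) :
    ∀ᶠ x : ℝ in atTop, ((yy δ x : ℝ) / (ξ * zz δ x)) ^ M ≤ zz δ x := by
  have hlim : Tendsto (fun x : ℝ => log (yy δ x / (ξ * zz δ x)) / log x) atTop (𝓝 0) := by
    have h := (tendsto_log_yy_div_zz hδ hξ).mul tendsto_log_log_div
    rw [mul_zero] at h
    refine h.congr' ?_
    filter_upwards [tendsto_log_log_atTop.eventually_gt_atTop 0] with x h2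
    field_simp
  have hlt := (hlim.const_mul M).eventually_lt (tendsto_log_zz_div_log hδ) (by simp)
  filter_upwards [hlt, eventually_zz_pos hδ, eventually_le_yy hδ, eventually_gt_atTop 1]
    with x h1 h2 h3 h4
  have : (0 : ℝ) < yy δ x := by linarith
  rw [← mul_div_assoc, div_lt_div_iff_of_pos_right (log_pos h4)] at h1
  rw [← log_le_log_iff (by positivity) h2, log_rpow (by positivity)]
  exact h1.le

end Asymptotics

lemma tendsto_sigBetween_inv_mul {ι : Type*} {l : Filter ι} {w t : ι → ℝ}
    (hw : Tendsto w l atTop) (hwt : ∀ᶠ i in l, w i ≤ t i) :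
    Tendsto (fun i => (sigBetween (w i) (t i))⁻¹ * (log (w i) / log (t i))) l (𝓝 1) := by
  rw [Metric.tendsto_nhds]
  intro ε hε
  obtain ⟨W, -, hW⟩ := exists_mertens_third (half_pos hε)
  filter_upwards [hw.eventually_ge_atTop W, hwt] with i h1 h2
  rw [Real.dist_eq]
  linarith [hW _ _ h1 h2]

/-- The filter of pairs `(x, j)` with `x → ∞` and `ξ ^ j` in the admissible range for `x`. -/
def scaleFilter (δ ξ : ℝ) : Filter (ℝ × ℕ) :=
  (atTop ×ˢ 𝓟 Set.univ) ⊓ 𝓟 {p | 2 * (yy δ p.1 : ℝ) / p.1 ≤ ξ ^ p.2 ∧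
    ξ ^ p.2 ≤ (yy δ p.1 : ℝ) / (ξ * zz δ p.1)}

lemma eventually_scaleFilter {δ ξ : ℝ} {P : ℝ × ℕ → Prop} :
    (∀ᶠ p in scaleFilter δ ξ, P p) ↔ ∀ᶠ x in atTop, ∀ j : ℕ,
      2 * (yy δ x : ℝ) / x ≤ ξ ^ j ∧ ξ ^ j ≤ (yy δ x : ℝ) / (ξ * zz δ x) → P (x, j) := by
  rw [scaleFilter, eventually_inf_principal, eventually_prod_principal_iff]
  simp

lemma tendsto_fst_scaleFilter (δ ξ : ℝ) : Tendsto Prod.fst (scaleFilter δ ξ) atTop :=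
  tendsto_fst.mono_left inf_le_left

lemma eventually_mem_scaleFilter (δ ξ : ℝ) : ∀ᶠ p in scaleFilter δ ξ,
    2 * (yy δ p.1 : ℝ) / p.1 ≤ ξ ^ p.2 ∧ ξ ^ p.2 ≤ (yy δ p.1 : ℝ) / (ξ * zz δ p.1) :=
  mem_inf_of_right (mem_principal_self _)

lemma tendsto_term_scaleFilter {δ M ξ : ℝ} (hδ : 0 < δ) (hM : 0 < M) (hξ : 1 < ξ) :
    Tendsto (fun p : ℝ × ℕ => (yy δ p.1 : ℝ)⁻¹ * (((QH δ ξ p.1 (ξ ^ p.2)).card : ℝ) * ξ ^ p.2 /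
      sigBetween ((ξ ^ p.2 : ℝ) ^ M) (zz δ p.1)) * p.2) (scaleFilter δ ξ)
      (𝓝 ((1 - 1 / ξ) / (M * log ξ))) := by
  have hξ0 : 0 < ξ := by linarith
  have hlξ : 0 < log ξ := log_pos hξ
  have hfst := tendsto_fst_scaleFilter δ ξ
  have hy := hfst.eventually ((eventually_le_yy hδ).and (eventually_gt_atTop 1))
  have hz := hfst.eventually (eventually_zz_pos hδ)
  have hmem := eventually_mem_scaleFilter δ ξ
  have hge : ∀ᶠ p in scaleFilter δ ξ, zz δ p.1 ≤ (yy δ p.1 : ℝ) / ξ ^ p.2 := by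
    filter_upwards [hmem, hz] with p h1 h2
    have h3 := h1.2
    rw [le_div_iff₀ (by positivity)] at h3
    rw [le_div_iff₀ (by positivity)]
    refine le_trans ?_ h3
    nlinarith [mul_pos h2 (pow_pos hξ0 p.2)]
  have hX : Tendsto (fun p : ℝ × ℕ => (yy δ p.1 : ℝ) / ξ ^ p.2) (scaleFilter δ ξ) atTop :=
    tendsto_atTop_mono' _ hge ((tendsto_zz hδ).comp hfst)
  have hcard := (tendsto_card_primesBetween hξ).comp hX
  have hwM : Tendsto (fun p : ℝ × ℕ => (ξ ^ p.2 : ℝ) ^ M) (scaleFilter δ ξ) atTop := by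
    refine (tendsto_rpow_atTop hM).comp (tendsto_atTop_mono' _ ?_
      ((tendsto_two_mul_yy_div hδ).comp hfst))
    filter_upwards [hmem] with p h
    exact h.1
  have hwz : ∀ᶠ p in scaleFilter δ ξ, (ξ ^ p.2 : ℝ) ^ M ≤ zz δ p.1 := by
    filter_upwards [hmem, hfst.eventually (eventually_rpow_le_zz hδ hξ0 M)] with p h1 h2
    exact (rpow_le_rpow (by positivity) h1.2 hM.le).trans h2
  have hsig := tendsto_sigBetween_inv_mul hwM hwz
  have hzlog := hfst.eventually ((tendsto_log_zz hδ).eventually_gt_atTop 0)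
  have hratio : Tendsto (fun p : ℝ × ℕ => log (zz δ p.1) / log ((yy δ p.1 : ℝ) / ξ ^ p.2))
      (scaleFilter δ ξ) (𝓝 1) := by
    refine tendsto_of_tendsto_of_tendsto_of_le_of_le' ((tendsto_log_zz_div_log_yy hδ).comp hfst)
      tendsto_const_nhds ?_ ?_
    · filter_upwards [hge, hz, hzlog, hy] with p h1 h2 h3 h4
      have h5 := log_le_log h2 h1
      have h6 : log ((yy δ p.1 : ℝ) / ξ ^ p.2) ≤ log (yy δ p.1) :=
        log_le_log (h2.trans_le h1) (div_le_self (by positivity) (one_le_pow₀ hξ.le))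
      simp only [Function.comp_apply]
      have h7 := h3.trans_le h5
      gcongr
    · filter_upwards [hge, hz, hzlog] with p h1 h2 h3
      have h5 := log_le_log h2 h1
      exact (div_le_one (h3.trans_le h5)).mpr h5
  have hprod := ((hcard.mul hsig).mul hratio).div_const (M * log ξ)
  rw [mul_one, mul_one] at hprod
  refine hprod.congr' ?_
  filter_upwards [hge, hz, hzlog, hy] with p h1 h2 h3 h4
  have h5 := h3.trans_le (log_le_log h2 h1)
  have hyp : (0 : ℝ) < yy δ p.1 := by linarith [h4.1, h4.2]
  have hQ : QH δ ξ p.1 (ξ ^ p.2) =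
      primesBetween ((yy δ p.1 : ℝ) / ξ ^ p.2 / ξ) ((yy δ p.1 : ℝ) / ξ ^ p.2) := by
    rw [div_div, mul_comm (ξ ^ p.2) ξ]
    rfl
  have hlw : log ((ξ ^ p.2 : ℝ) ^ M) = M * (p.2 * log ξ) := by
    rw [log_rpow (by positivity), log_pow]
  simp only [Function.comp_apply]
  rw [hlw, ← hQ]
  field_simp

lemma tendsto_sum_inv_mod_two {e : ℕ} (he : e < 2) {l : Filter ℝ} {a b g : ℝ → ℝ} {α β : ℝ}
    (hα : 0 < α) (hαβ : α < β) (hg : Tendsto g l atTop)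
    (ha : Tendsto (fun x => a x / g x) l (𝓝 α)) (hb : Tendsto (fun x => b x / g x) l (𝓝 β)) :
    (∀ᶠ x in l, 1 ≤ b x) ∧ Tendsto (fun x =>
      ∑ i ∈ Finset.Ico ⌈(a x - e) / 2⌉₊ (⌊(b x - e) / 2⌋₊ + 1), 1 / ((2 * i + e : ℕ) : ℝ)) l
      (𝓝 (log (β / α) / 2)) := by
  have hg0 := hg.eventually_gt_atTop 0
  have hβ : 0 < β := hα.trans hαβ
  have haT : Tendsto a l atTop := by
    refine (ha.pos_mul_atTop hα hg).congr' ?_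
    filter_upwards [hg0] with x hx
    field_simp
  have h2 := hg.const_div_atTop 2
  have ha1 : Tendsto (fun x => (a x + 2) / g x) l (𝓝 α) := by
    simpa [add_div] using ha.add h2
  have ha2 : Tendsto (fun x => (a x - 2) / g x) l (𝓝 α) := by
    simpa [sub_div] using ha.sub h2
  have hab : ∀ᶠ x in l, a x + 2 ≤ b x := by
    filter_upwards [ha1.eventually_lt hb hαβ, hg0] with x h1 h3
    exact ((div_lt_div_iff_of_pos_right h3).mp h1).le
  have ha4 := haT.eventually_ge_atTop 4
  have hlim : ∀ c : ℝ → ℝ, (∀ᶠ x in l, 0 < c x) → Tendsto (fun x => c x / g x) l (𝓝 α) →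
      Tendsto (fun x => (log (b x) - log (c x)) / 2) l (𝓝 (log (β / α) / 2)) := by
    intro c hc0 hc
    have h := ((hb.log hβ.ne').sub (hc.log hα.ne')).div_const 2
    rw [← log_div hβ.ne' hα.ne'] at h
    refine h.congr' ?_
    filter_upwards [hc0, hg0, hab, ha4] with x h1 h3 h4 h5
    rw [log_div (by linarith) h3.ne', log_div h1.ne' h3.ne']
    ring
  refine ⟨?_, tendsto_of_tendsto_of_tendsto_of_le_of_le'
    (hlim (fun x => a x + 2) ?_ ha1) (hlim (fun x => a x - 2) ?_ ha2) ?_ ?_⟩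
  · filter_upwards [hab, ha4] with x h1 h3
    linarith
  · filter_upwards [ha4] with x h3
    linarith
  · filter_upwards [ha4] with x h3
    linarith
  · filter_upwards [hab, ha4] with x h1 h3
    exact (sum_inv_mod_two_bounds he h3 h1).1
  · filter_upwards [hab, ha4] with x h1 h3
    exact (sum_inv_mod_two_bounds he h3 h1).2

lemma tendsto_tsum_mod_two {δ M ξ : ℝ} (hδ0 : 0 < δ) (hδ1 : δ < 1 / 2) (hM : 0 < M) (hξ : 1 < ξ)
    {e : ℕ} (he : e < 2) :
    Tendsto (fun x : ℝ => (yy δ x : ℝ)⁻¹ *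
        ∑' j : ℕ, if j % 2 = e ∧ 2 * (yy δ x : ℝ) / x ≤ ξ ^ j ∧
            ξ ^ j ≤ (yy δ x : ℝ) / (ξ * zz δ x)
          then ((QH δ ξ x (ξ ^ j)).card : ℝ) * ξ ^ j / sigBetween ((ξ ^ j : ℝ) ^ M) (zz δ x)
          else 0) atTop
      (𝓝 ((1 - 1 / ξ) / (M * log ξ) * (log (1 / (2 * δ)) / 2))) := by
  have hξ0 : 0 < ξ := by linarith
  have hlξ : 0 < log ξ := log_pos hξ
  set a : ℝ → ℝ := fun x => log (2 * yy δ x / x) / log ξ with ha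
  set b : ℝ → ℝ := fun x => log (yy δ x / (ξ * zz δ x)) / log ξ with hb
  set c := (1 - 1 / ξ) / (M * log ξ) with hc
  have hcond : ∀ᶠ x in atTop, ∀ j : ℕ,
      (2 * (yy δ x : ℝ) / x ≤ ξ ^ j ∧ ξ ^ j ≤ (yy δ x : ℝ) / (ξ * zz δ x)) ↔
        (a x ≤ j ∧ j ≤ b x) := by
    filter_upwards [eventually_le_yy hδ0, eventually_zz_pos hδ0, eventually_gt_atTop 0]
      with x h1 h2 h3 j
    have hyp : (0 : ℝ) < yy δ x := by linarith
    rw [ha, hb]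
    simp only
    rw [div_le_iff₀ hlξ, le_div_iff₀ hlξ, ← log_pow, log_le_log_iff (by positivity) (by positivity),
      log_le_log_iff (by positivity) (by positivity)]
  have hlima : Tendsto (fun x => a x / log (log x)) atTop (𝓝 (δ / log ξ)) :=
    ((tendsto_log_two_mul_yy_div hδ0).div_const (log ξ)).congr fun x => by rw [ha]; ring
  have hlimb : Tendsto (fun x => b x / log (log x)) atTop (𝓝 (1 / 2 / log ξ)) :=
    ((tendsto_log_yy_div_zz hδ0 hξ0).div_const (log ξ)).congr fun x => by rw [hb]; ring
  obtain ⟨hb1, hS⟩ := tendsto_sum_inv_mod_two he (div_pos hδ0 hlξ)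
    ((div_lt_div_iff_of_pos_right hlξ).mpr hδ1) tendsto_log_log_atTop hlima hlimb
  rw [show 1 / 2 / log ξ / (δ / log ξ) = 1 / (2 * δ) by field_simp] at hS
  set I : ℝ → Finset ℕ := fun x => Finset.Ico ⌈(a x - e) / 2⌉₊ (⌊(b x - e) / 2⌋₊ + 1) with hI
  set s := log (1 / (2 * δ)) / 2 with hs
  have hs0 : 0 < s := by
    refine half_pos (log_pos ?_)
    rw [lt_div_iff₀ (by positivity)]
    linarith
  set F : ℝ → ℕ → ℝ := fun x j =>
    ((QH δ ξ x (ξ ^ j)).card : ℝ) * ξ ^ j / sigBetween ((ξ ^ j : ℝ) ^ M) (zz δ x) with hF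
  have hT : ∀ᶠ x in atTop, (yy δ x : ℝ)⁻¹ * ∑ i ∈ I x, F x (2 * i + e) = (yy δ x : ℝ)⁻¹ *
        ∑' j : ℕ, if j % 2 = e ∧ 2 * (yy δ x : ℝ) / x ≤ ξ ^ j ∧
            ξ ^ j ≤ (yy δ x : ℝ) / (ξ * zz δ x) then F x j else 0 := by
    filter_upwards [hcond, hb1] with x h1 h2
    simp only [h1]
    rw [tsum_ite_mod_two_eq_sum he h2]
  refine Tendsto.congr' hT ?_
  have hdiff : Tendsto (fun x => (yy δ x : ℝ)⁻¹ * ∑ i ∈ I x, F x (2 * i + e) -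
      c * ∑ i ∈ I x, 1 / ((2 * i + e : ℕ) : ℝ)) atTop (𝓝 0) := by
    rw [Metric.tendsto_nhds]
    intro ε hε
    have hη : 0 < ε / (s + 1) := by positivity
    have hterm := (Metric.tendsto_nhds.mp (tendsto_term_scaleFilter hδ0 hM hξ)) _ hη
    rw [eventually_scaleFilter] at hterm
    filter_upwards [hterm, hcond, hS.eventually_lt_const (lt_add_one s), hb1,
      (((tendsto_log_two_mul_yy_div hδ0).pos_mul_atTop hδ0
        tendsto_log_log_atTop).eventually_gt_atTop 0),
      tendsto_log_log_atTop.eventually_gt_atTop 0] with x h1 h2 h3 h4 h5 h6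
    have ha0 : 0 < a x := by
      rw [div_mul_cancel₀ _ h6.ne'] at h5
      exact div_pos h5 hlξ
    have heb : (e : ℝ) ≤ b x := le_trans (by exact_mod_cast Nat.le_of_lt_succ he) h4
    rw [dist_zero_right, Real.norm_eq_abs, Finset.mul_sum, Finset.mul_sum,
      ← Finset.sum_sub_distrib]
    calc _ ≤ ∑ i ∈ I x, |(yy δ x : ℝ)⁻¹ * F x (2 * i + e) - c * (1 / ((2 * i + e : ℕ) : ℝ))| :=
          Finset.abs_sum_le_sum_abs _ _
      _ ≤ ∑ i ∈ I x, ε / (s + 1) * (1 / ((2 * i + e : ℕ) : ℝ)) := by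
          refine Finset.sum_le_sum fun i hi => ?_
          rw [hI, Finset.mem_Ico, Nat.ceil_le, Nat.lt_succ_iff,
            Nat.le_floor_iff (by linarith)] at hi
          have hij : a x ≤ ((2 * i + e : ℕ) : ℝ) ∧ ((2 * i + e : ℕ) : ℝ) ≤ b x := by
            push_cast
            constructor <;> linarith [hi.1, hi.2]
          have hj0 : 0 < ((2 * i + e : ℕ) : ℝ) := ha0.trans_le hij.1
          have h := (h1 (2 * i + e) ((h2 _).mpr hij)).le
          rw [Real.dist_eq] at h
          have heq : (yy δ x : ℝ)⁻¹ * F x (2 * i + e) - c * (1 / ((2 * i + e : ℕ) : ℝ)) =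
              ((yy δ x : ℝ)⁻¹ * F x (2 * i + e) * ((2 * i + e : ℕ) : ℝ) - c) *
                (1 / ((2 * i + e : ℕ) : ℝ)) := by
            field_simp
          rw [heq, abs_mul, abs_of_pos (one_div_pos.mpr hj0)]
          exact mul_le_mul_of_nonneg_right h (one_div_pos.mpr hj0).le
      _ = ε / (s + 1) * ∑ i ∈ I x, 1 / ((2 * i + e : ℕ) : ℝ) := by rw [Finset.mul_sum]
      _ < ε / (s + 1) * (s + 1) := by gcongr
      _ = ε := by field_simp
  have := hdiff.add (hS.const_mul c)
  rw [zero_add] at this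
  exact this.congr fun x => by ring

end Auxiliary

theorem stmt11 (δ M : ℝ) (K : ℕ) (ξ : ℝ)
    (hδ0 : 0 < δ) (hδ1 : δ < 1/2) (hM : 0 < M) (hK : 2 ≤ K) (hξ : 1 < ξ) :
    Filter.Tendsto (fun x : ℝ =>
        (K : ℝ) / (((K : ℝ) + 1) * (yy δ x : ℝ)) *
          ∑' j : ℕ, if Even j ∧ 2 * (yy δ x : ℝ) / x ≤ ξ ^ j ∧
              ξ ^ j ≤ (yy δ x : ℝ) / (ξ * zz δ x)
            then ((QH δ ξ x (ξ ^ j)).card : ℝ) * ξ ^ j / sigBetween ((ξ ^ j : ℝ) ^ M) (zz δ x)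
            else 0)
      Filter.atTop
      (nhds ((K : ℝ) * (ξ - 1) * Real.log (1 / (2 * δ)) /
        (2 * ((K : ℝ) + 1) * M * ξ * Real.log ξ))) ∧
    Filter.Tendsto (fun x : ℝ =>
        (K : ℝ) / (((K : ℝ) + 1) * (yy δ x : ℝ)) *
          ∑' j : ℕ, if Odd j ∧ 2 * (yy δ x : ℝ) / x ≤ ξ ^ j ∧
              ξ ^ j ≤ (yy δ x : ℝ) / (ξ * zz δ x)
            then ((QH δ ξ x (ξ ^ j)).card : ℝ) * ξ ^ j / sigBetween ((ξ ^ j : ℝ) ^ M) (zz δ x)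
            else 0)
      Filter.atTop
      (nhds ((K : ℝ) * (ξ - 1) * Real.log (1 / (2 * δ)) /
        (2 * ((K : ℝ) + 1) * M * ξ * Real.log ξ))) := by
  have hlim : (K : ℝ) * (ξ - 1) * Real.log (1 / (2 * δ)) /
      (2 * ((K : ℝ) + 1) * M * ξ * Real.log ξ) =
      K / ((K : ℝ) + 1) *
        ((1 - 1 / ξ) / (M * Real.log ξ) * (Real.log (1 / (2 * δ)) / 2)) := by
    have h1 : Real.log ξ ≠ 0 := (Real.log_pos hξ).ne'
    have h2 : ξ ≠ 0 := by linarith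
    field_simp
  rw [hlim]
  constructor
  · refine ((tendsto_tsum_mod_two hδ0 hδ1 hM hξ (e := 0) two_pos).const_mul
      ((K : ℝ) / ((K : ℝ) + 1))).congr fun x => ?_
    simp only [Nat.even_iff]
    rw [← mul_assoc, ← div_eq_mul_inv, div_div (K : ℝ)]
  · refine ((tendsto_tsum_mod_two hδ0 hδ1 hM hξ (e := 1) one_lt_two).const_mul
      ((K : ℝ) / ((K : ℝ) + 1))).congr fun x => ?_
    simp only [Nat.odd_iff]
    rw [← mul_assoc, ← div_eq_mul_inv, div_div (K : ℝ)]
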